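/- Let d ≥ 3 be an integer and let a > 0, γ > 0. Let V₁, V₂ : ℝ^d → ℝ with V₁ continuously differentiable, satisfying |V₁(x)| ≤ a(1+|x|)^{−γ}, |V₂(x)| ≤ a(1+|x|)^{−γ−1} and ∂_rV₁(x) ≤ a(1+|x|)^{−γ−1} for all x. Then there exists a function B : (0,∞) → (0,∞) (depending on a, γ, d) with τ₀·B(τ₀) → 0 as τ₀ → 0, and an absolute constant C (independent of ε, τ and τ₀), such that: for every τ₀ > 0, every ε ≠ 0, every τ ≥ B(τ₀), and every classical solution u of −Δu + (V₁+V₂)u ± iεu − τu = f with u, ∇u ∈ L²(ℝ^d) and f ∈ L²(ℝ^d), one has ‖∇u‖²_{X_{τ₀}} + τ‖u‖²_{X_{τ₀}} + (d−3)∫_{|x|>τ₀} |u(x)|²/|x|³ dx + sup_{R≥τ₀} R^{−2}∫_{|x|=R} |u(x)|² dσ_R(x) ≤ C‖f‖²_{X*_{τ₀}}. -/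

import Mathlib

/-!
Write the equation as `-Δu + Zu + ieu = h` with `Z = V₁ - τ` and `h = f - V₂u`. At every scale
`R ≥ τ₀` test it against the Morawetz multiplier `β (x·∇u + (d-1)/2 u)`, `β = (R² + |x|²)^(-1/2)`.
As `|V₁| ≤ a ≤ τ/2`, the resulting quadratic form is positive, and its supremum over `R` controls
the Morrey norms of `|∇u|²` and `τ|u|²`, the cubic quantity `S = sup R⁻³ ∫_{B(0,R)} |u|²` and the
integral of `(d-3)|u|²/|x|³`; a radial trace inequality then bounds the integrals over spheres.

On the other side stand three kinds of terms. Those with `f` are bounded by the duality between `X`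
and `X*`. Those with `V₂` and `∂_r V₁` carry a weight of size `(1 + |x|)^(-γ-1)`, whose dyadic mass
is finite, say `c`; balancing `u` against `∇u` by `√τ` they acquire the factor `c/√τ`. The term
`|e| ∫ |u||∇u|` is at most `√(τ+a+|e|) ∫ |h||u|` by the energy identities, and the part of it
growing with `e` is matched by `|e| ‖u‖²_X ≤ S + √|e| ∫ |h||u|`. Everything but `f` is absorbed as
soon as `√τ` is a large multiple of `c`.
-/

noncomputable section
open MeasureTheory Metric Set ENNReal

abbrev Ed (d : ℕ) := EuclideanSpace ℝ (Fin d)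

/-- partial derivative of a complex valued function -/
def pd {d : ℕ} (u : Ed d → ℂ) (i : Fin d) (x : Ed d) : ℂ :=
  fderiv ℝ u x (EuclideanSpace.single i 1)

/-- Laplacian of a complex valued function -/
def lap {d : ℕ} (u : Ed d → ℂ) (x : Ed d) : ℂ :=
  ∑ i, fderiv ℝ (pd u i) x (EuclideanSpace.single i 1)

/-- squared norm of the gradient, as an extended nonnegative real -/
def gradSq {d : ℕ} (u : Ed d → ℂ) (x : Ed d) : ℝ≥0∞ :=
  ∑ i, (‖pd u i x‖₊ : ℝ≥0∞) ^ 2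

/-- |u(x)|² as an extended nonnegative real -/
def usq {d : ℕ} (u : Ed d → ℂ) (x : Ed d) : ℝ≥0∞ := (‖u x‖₊ : ℝ≥0∞) ^ 2

/-- radial derivative ∂_r V (x) = (x/|x|)·∇V(x) -/
def radialDeriv {d : ℕ} (V : Ed d → ℝ) (x : Ed d) : ℝ :=
  fderiv ℝ V x x / ‖x‖

/-- Morrey–Campanato type quantity sup_{R>0} (1/R) ∫_{B(0,R)} g -/
def nX2 {d : ℕ} (g : Ed d → ℝ≥0∞) : ℝ≥0∞ :=
  ⨆ (R : ℝ) (_ : 0 < R), (ENNReal.ofReal R)⁻¹ * ∫⁻ x in ball (0 : Ed d) R, g x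

/-- dyadic shell C_j -/
def shell (d : ℕ) (j : ℤ) : Set (Ed d) := {x | (2:ℝ)^j < ‖x‖ ∧ ‖x‖ ≤ (2:ℝ)^(j+1)}

/-- the dual norm ‖f‖_{X*} applied to g = |f|² -/
def nXstar {d : ℕ} (g : Ed d → ℝ≥0∞) : ℝ≥0∞ :=
  ∑' j : ℤ, (ENNReal.ofReal ((2:ℝ)^(j+1)) * ∫⁻ x in shell d j, g x) ^ (1/2 : ℝ)

/-- the index j₀ with 2^{j₀} < ρ ≤ 2^{j₀+1} -/
def jIdx (ρ : ℝ) : ℤ := ⌈Real.logb 2 ρ⌉ - 1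

/-- sup_{R ≥ ρ} (1/R)∫_{B(0,R)} g -/
def nX2r {d : ℕ} (ρ : ℝ) (g : Ed d → ℝ≥0∞) : ℝ≥0∞ :=
  ⨆ (R : ℝ) (_ : ρ ≤ R), (ENNReal.ofReal R)⁻¹ * ∫⁻ x in ball (0 : Ed d) R, g x

/-- the dual norm ‖f‖_{X*_ρ} applied to g = |f|² -/
def nXstarr {d : ℕ} (ρ : ℝ) (g : Ed d → ℝ≥0∞) : ℝ≥0∞ :=
  (∑' j : {j : ℤ // jIdx ρ ≤ j},
    (ENNReal.ofReal ((2:ℝ)^((j:ℤ)+1)) * ∫⁻ x in shell d (j:ℤ), g x) ^ (1/2 : ℝ))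
  + (ENNReal.ofReal ρ * ∫⁻ x in ball (0 : Ed d) ρ, g x) ^ (1/2 : ℝ)

/-- integral of g over the sphere of radius R w.r.t. (d-1)-dimensional Hausdorff measure -/
def sphInt {d : ℕ} (R : ℝ) (g : Ed d → ℝ≥0∞) : ℝ≥0∞ :=
  ∫⁻ x in Metric.sphere (0 : Ed d) R, g x ∂(μH[(d:ℝ) - 1])

open Filter Topology
open scoped RealInnerProductSpace

/-! ### The divergence theorem on the whole space -/

section Divergence

variable {E : Type*} [NormedAddCommGroup E] [NormedSpace ℝ E] [FiniteDimensional ℝ E]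

/-- The cutoff `x ↦ φ (x / (n + 1))`, which equals `1` on balls growing with `n`. -/
def dilatedBump (φ : ContDiffBump (0 : E)) (n : ℕ) (x : E) : ℝ := φ ((n + 1 : ℝ)⁻¹ • x)

variable (φ : ContDiffBump (0 : E))

lemma contDiff_dilatedBump (n : ℕ) : ContDiff ℝ 1 (dilatedBump φ n) :=
  φ.contDiff.comp (contDiff_const_smul _)

lemma hasCompactSupport_dilatedBump (n : ℕ) : HasCompactSupport (dilatedBump φ n) :=
  φ.hasCompactSupport.comp_homeomorph (Homeomorph.smulOfNeZero ((n + 1 : ℝ)⁻¹) (by positivity))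

lemma norm_dilatedBump_le_one (n : ℕ) (x : E) : ‖dilatedBump φ n x‖ ≤ 1 := by
  rw [dilatedBump, Real.norm_of_nonneg φ.nonneg]
  exact φ.le_one

lemma tendsto_inv_natCast_add_one : Tendsto (fun n : ℕ ↦ ((n : ℝ) + 1)⁻¹) atTop (𝓝 0) := by
  simpa using tendsto_one_div_add_atTop_nhds_zero_nat (𝕜 := ℝ)

lemma tendsto_dilatedBump (x : E) : Tendsto (fun n ↦ dilatedBump φ n x) atTop (𝓝 1) := by
  have shrink : Tendsto (fun n : ℕ ↦ ((n : ℝ) + 1)⁻¹ • x) atTop (𝓝 0) := by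
    simpa using tendsto_inv_natCast_add_one.smul_const x
  have := (φ.continuous.tendsto 0).comp shrink
  rwa [φ.one_of_mem_closedBall (mem_closedBall_self φ.rIn_pos.le)] at this

lemma exists_norm_fderiv_dilatedBump_le :
    ∃ M : ℝ, ∀ n x, ‖fderiv ℝ (dilatedBump φ n) x‖ ≤ ((n : ℝ) + 1)⁻¹ * M := by
  obtain ⟨M, hM⟩ := (φ.hasCompactSupport.fderiv (𝕜 := ℝ)).exists_bound_of_continuous
    (φ.contDiff.continuous_fderiv (n := 1) one_ne_zero)
  refine ⟨M, fun n x ↦ ?_⟩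
  rw [show dilatedBump φ n = fun y ↦ φ (((n : ℝ) + 1)⁻¹ • y) from rfl, fderiv_comp_smul, norm_smul,
    Real.norm_of_nonneg (by positivity)]
  gcongr
  exact hM _

variable [MeasurableSpace E] [BorelSpace E] {μ : Measure E} {J Y : E → ℝ}

lemma integrable_dilatedBump_mul (hJ : Integrable J μ) (n : ℕ) :
    Integrable (fun x ↦ dilatedBump φ n x * J x) μ :=
  hJ.bdd_mul (contDiff_dilatedBump φ n).continuous.aestronglyMeasurable
    (.of_forall (norm_dilatedBump_le_one φ n))

lemma tendsto_integral_dilatedBump_mul (hJ : Integrable J μ) :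
    Tendsto (fun n ↦ ∫ x, dilatedBump φ n x * J x ∂μ) atTop (𝓝 (∫ x, J x ∂μ)) := by
  refine tendsto_integral_of_dominated_convergence (‖J ·‖)
    (fun n ↦ (integrable_dilatedBump_mul φ hJ n).1) hJ.norm (fun n ↦ .of_forall fun x ↦ ?_)
    (.of_forall fun x ↦ by simpa using (tendsto_dilatedBump φ x).mul_const (J x))
  rw [norm_mul]
  exact mul_le_of_le_one_left (norm_nonneg _) (norm_dilatedBump_le_one φ n x)

variable [μ.IsAddHaarMeasure]

lemma integrable_dilatedBump_mul_of_continuous (hY : Continuous Y) (n : ℕ) :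
    Integrable (fun x ↦ dilatedBump φ n x * Y x) μ :=
  ((contDiff_dilatedBump φ n).continuous.mul hY).integrable_of_hasCompactSupport
    (hasCompactSupport_dilatedBump φ n).mul_right

lemma integral_dilatedBump_mul_fderiv (hY : ContDiff ℝ 1 Y) (v : E) (n : ℕ) :
    ∫ x, dilatedBump φ n x * fderiv ℝ Y x v ∂μ
      = -∫ x, fderiv ℝ (dilatedBump φ n) x v * Y x ∂μ := by
  have hχ := contDiff_dilatedBump φ n
  have hdY : Continuous fun x ↦ fderiv ℝ Y x v :=
    (hY.continuous_fderiv one_ne_zero).clm_apply continuous_const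
  have hdχ : Continuous fun x ↦ fderiv ℝ (dilatedBump φ n) x v :=
    (hχ.continuous_fderiv one_ne_zero).clm_apply continuous_const
  exact integral_mul_fderiv_eq_neg_fderiv_mul_of_integrable
    ((hdχ.mul hY.continuous).integrable_of_hasCompactSupport
      ((hasCompactSupport_dilatedBump φ n).fderiv_apply (𝕜 := ℝ) v).mul_right)
    (integrable_dilatedBump_mul_of_continuous φ hdY n)
    (integrable_dilatedBump_mul_of_continuous φ hY.continuous n)
    (fun x _ ↦ hχ.differentiable one_ne_zero x) (fun x _ ↦ hY.differentiable one_ne_zero x)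

lemma tendsto_integral_dilatedBump_mul_fderiv (hY : ContDiff ℝ 1 Y) (hYi : Integrable Y μ)
    (v : E) : Tendsto (fun n ↦ ∫ x, dilatedBump φ n x * fderiv ℝ Y x v ∂μ) atTop (𝓝 0) := by
  obtain ⟨M, hM⟩ := exists_norm_fderiv_dilatedBump_le φ
  have bound (n : ℕ) : ‖∫ x, dilatedBump φ n x * fderiv ℝ Y x v ∂μ‖
      ≤ ((n : ℝ) + 1)⁻¹ * (M * ‖v‖ * ∫ x, ‖Y x‖ ∂μ) := by
    rw [integral_dilatedBump_mul_fderiv φ hY, norm_neg, ← mul_assoc, ← integral_const_mul]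
    refine norm_integral_le_of_norm_le (hYi.norm.const_mul _) (.of_forall fun x ↦ ?_)
    rw [norm_mul, ← mul_assoc]
    gcongr
    exact (fderiv ℝ (dilatedBump φ n) x).le_of_opNorm_le (hM n x) v
  refine squeeze_zero_norm bound ?_
  simpa using tendsto_inv_natCast_add_one.mul_const (M * ‖v‖ * ∫ x, ‖Y x‖ ∂μ)

-- Stated as an inequality because the divergence of the Morawetz flux contains `∂_r V₁`, which is
-- bounded only from above, so it need not be integrable.
theorem integral_nonneg_of_sum_fderiv_le {ι : Type*} [Fintype ι] {Y : ι → E → ℝ} (v : ι → E)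
    (hY : ∀ i, ContDiff ℝ 1 (Y i)) (hYi : ∀ i, Integrable (Y i) μ) (hJ : Integrable J μ)
    (hdiv : ∀ x, ∑ i, fderiv ℝ (Y i) x (v i) ≤ J x) : 0 ≤ ∫ x, J x ∂μ := by
  let φ : ContDiffBump (0 : E) := default
  have hdiv_lim : Tendsto (fun n ↦ ∑ i, ∫ x, dilatedBump φ n x * fderiv ℝ (Y i) x (v i) ∂μ)
      atTop (𝓝 0) := by
    simpa using tendsto_finsetSum Finset.univ
      fun i _ ↦ tendsto_integral_dilatedBump_mul_fderiv φ (hY i) (hYi i) (v i)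
  refine le_of_tendsto_of_tendsto' hdiv_lim (tendsto_integral_dilatedBump_mul φ hJ) fun n ↦ ?_
  have hint (i : ι) : Integrable (fun x ↦ dilatedBump φ n x * fderiv ℝ (Y i) x (v i)) μ :=
    integrable_dilatedBump_mul_of_continuous φ
      (((hY i).continuous_fderiv one_ne_zero).clm_apply continuous_const) n
  rw [← integral_finsetSum _ fun i _ ↦ hint i]
  refine integral_mono (integrable_finsetSum _ fun i _ ↦ hint i)
    (integrable_dilatedBump_mul φ hJ n) fun x ↦ ?_
  dsimp only
  rw [← Finset.mul_sum]
  exact mul_le_mul_of_nonneg_left (hdiv x) φ.nonneg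

end Divergence

/-! ### Calculus in Euclidean coordinates -/

section Calculus

lemma fderiv_fderiv_apply_self {E F : Type*} [NormedAddCommGroup E] [NormedSpace ℝ E]
    [NormedAddCommGroup F] [NormedSpace ℝ F] {u : E → F} (hu : ContDiff ℝ 2 u) (x v : E) :
    fderiv ℝ (fun y ↦ fderiv ℝ u y y) x v
      = fderiv ℝ (fun y ↦ fderiv ℝ u y v) x x + fderiv ℝ u x v := by
  have hdu : DifferentiableAt ℝ (fderiv ℝ u) x :=
    (hu.fderiv_right (m := 1) (by norm_num)).differentiable one_ne_zero x
  have symm := (hu.contDiffAt (x := x)).isSymmSndFDerivAt (by simp) v x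
  rw [fderiv_clm_apply hdu differentiableAt_fun_id,
    fderiv_clm_apply hdu (differentiableAt_const v)]
  simpa [add_comm] using symm

variable {d : ℕ} {u : Ed d → ℂ}

lemma fderiv_apply_eq_sum {F : Type*} [NormedAddCommGroup F] [NormedSpace ℝ F] (φ : Ed d → F)
    (x v : Ed d) :
    fderiv ℝ φ x v = ∑ i, v i • fderiv ℝ φ x (EuclideanSpace.single i 1) := by
  conv_lhs => rw [← (EuclideanSpace.basisFun (Fin d) ℝ).sum_repr v]
  simp

lemma fderiv_apply_eq_sum_pd (u : Ed d → ℂ) (x v : Ed d) :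
    fderiv ℝ u x v = ∑ i, v i • pd u i x :=
  fderiv_apply_eq_sum u x v

lemma contDiff_pd (hu : ContDiff ℝ 2 u) (i : Fin d) : ContDiff ℝ 1 (pd u i) :=
  (hu.fderiv_right (by norm_num)).clm_apply contDiff_const

lemma contDiff_fderiv_apply_self (hu : ContDiff ℝ 2 u) :
    ContDiff ℝ 1 fun x ↦ fderiv ℝ u x x :=
  (hu.fderiv_right (by norm_num)).clm_apply contDiff_id

lemma continuous_pd (hu : ContDiff ℝ 1 u) (i : Fin d) : Continuous (pd u i) :=
  (hu.continuous_fderiv one_ne_zero).clm_apply continuous_const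

lemma continuous_lap (hu : ContDiff ℝ 2 u) : Continuous (lap u) :=
  continuous_finsetSum _ fun i _ ↦
    ((contDiff_pd hu i).continuous_fderiv one_ne_zero).clm_apply continuous_const

/-- The Euclidean norm `|∇u(x)|` of the gradient of a complex valued function. -/
def gradNorm (u : Ed d → ℂ) (x : Ed d) : ℝ := √(∑ i, ‖pd u i x‖ ^ 2)

lemma gradNorm_nonneg (u : Ed d → ℂ) (x : Ed d) : 0 ≤ gradNorm u x := Real.sqrt_nonneg _

lemma gradNorm_sq (u : Ed d → ℂ) (x : Ed d) : gradNorm u x ^ 2 = ∑ i, ‖pd u i x‖ ^ 2 :=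
  Real.sq_sqrt (by positivity)

lemma continuous_gradNorm (hu : ContDiff ℝ 1 u) : Continuous (gradNorm u) :=
  (continuous_finsetSum _ fun i _ ↦ (continuous_pd hu i).norm.pow 2).sqrt

lemma contDiff_gradNorm_sq (hu : ContDiff ℝ 2 u) : ContDiff ℝ 1 fun x ↦ gradNorm u x ^ 2 := by
  simp only [gradNorm_sq]
  exact ContDiff.sum fun i _ ↦ (contDiff_pd hu i).norm_sq ℝ

lemma norm_pd_le_gradNorm (u : Ed d → ℂ) (i : Fin d) (x : Ed d) : ‖pd u i x‖ ≤ gradNorm u x :=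
  Real.le_sqrt_of_sq_le
    (Finset.single_le_sum (f := fun j ↦ ‖pd u j x‖ ^ 2) (fun _ _ ↦ by positivity) (by simp))

lemma norm_fderiv_apply_le (u : Ed d → ℂ) (x v : Ed d) :
    ‖fderiv ℝ u x v‖ ≤ ‖v‖ * gradNorm u x := by
  rw [fderiv_apply_eq_sum_pd, gradNorm, EuclideanSpace.norm_eq]
  refine (norm_sum_le _ _).trans ?_
  simp only [norm_smul]
  exact Real.sum_mul_le_sqrt_mul_sqrt _ _ _

lemma gradSq_eq_ofReal (u : Ed d → ℂ) (x : Ed d) :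
    gradSq u x = ENNReal.ofReal (gradNorm u x ^ 2) := by
  rw [gradNorm_sq, ENNReal.ofReal_sum_of_nonneg fun _ _ ↦ by positivity]
  simp [gradSq, ENNReal.ofReal_pow, ofReal_norm, enorm]

lemma usq_eq_ofReal (u : Ed d → ℂ) (x : Ed d) : usq u x = ENNReal.ofReal (‖u x‖ ^ 2) := by
  simp [usq, ENNReal.ofReal_pow, ofReal_norm, enorm]

lemma fderiv_gradNorm_sq_apply_self (hu : ContDiff ℝ 2 u) (x : Ed d) :
    fderiv ℝ (fun y ↦ gradNorm u y ^ 2) x x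
      = 2 * ∑ i, ⟪pd u i x, fderiv ℝ (pd u i) x x⟫ := by
  have hd (i : Fin d) : DifferentiableAt ℝ (pd u i) x :=
    (contDiff_pd hu i).differentiable one_ne_zero x
  simp only [gradNorm_sq]
  rw [fderiv_fun_sum fun i _ ↦ (hd i).norm_sq ℝ, Finset.mul_sum, sum_apply]
  refine Finset.sum_congr rfl fun i _ ↦ ?_
  rw [((hd i).hasFDerivAt.norm_sq).fderiv]
  simp [-Complex.inner]

lemma sum_fderiv_coord_mul {φ : Ed d → ℝ} {x : Ed d} (hφ : DifferentiableAt ℝ φ x) :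
    ∑ i, fderiv ℝ (fun y : Ed d ↦ y i * φ y) x (EuclideanSpace.single i 1)
      = d * φ x + fderiv ℝ φ x x := by
  have coord (i : Fin d) : HasFDerivAt (fun y : Ed d ↦ y i)
      (EuclideanSpace.proj i : Ed d →L[ℝ] ℝ) x :=
    (EuclideanSpace.proj (𝕜 := ℝ) i).hasFDerivAt
  simp_rw [fun i ↦ ((coord i).fun_mul hφ.hasFDerivAt).fderiv, add_apply, smul_apply]
  rw [Finset.sum_add_distrib, fderiv_apply_eq_sum φ x x, add_comm]
  simp

lemma sum_fderiv_inner_pd (hu : ContDiff ℝ 2 u) {m : Ed d → ℂ} {x : Ed d}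
    (hm : DifferentiableAt ℝ m x) :
    ∑ i, fderiv ℝ (fun y ↦ ⟪pd u i y, m y⟫) x (EuclideanSpace.single i 1)
      = ⟪lap u x, m x⟫ + ∑ i, ⟪pd u i x, pd m i x⟫ := by
  simp_rw [fun i ↦ fderiv_inner_apply ℝ ((contDiff_pd hu i).differentiable one_ne_zero x) hm]
  rw [Finset.sum_add_distrib, lap, sum_inner, add_comm]
  rfl

end Calculus

/-! ### The Morawetz identity -/

section RadialWeight

variable {E : Type*} [NormedAddCommGroup E] {R : ℝ}

/-- The smooth substitute `(R² + |x|²)^(-1/2)` for `|x|⁻¹`, at scale `R`. -/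
def radialWeight (R : ℝ) (x : E) : ℝ := (√(R ^ 2 + ‖x‖ ^ 2))⁻¹

lemma radialWeight_pos (hR : 0 < R) (x : E) : 0 < radialWeight R x := by
  unfold radialWeight
  positivity

lemma radialWeight_sq_mul (hR : 0 < R) (x : E) :
    radialWeight R x ^ 2 * (R ^ 2 + ‖x‖ ^ 2) = 1 := by
  rw [radialWeight, inv_pow, Real.sq_sqrt (by positivity)]
  exact inv_mul_cancel₀ (by positivity)

lemma radialWeight_le_inv (hR : 0 < R) (x : E) : radialWeight R x ≤ R⁻¹ :=
  inv_anti₀ hR (Real.le_sqrt_of_sq_le (by nlinarith [sq_nonneg ‖x‖]))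

lemma radialWeight_mul_norm_le_one (R : ℝ) (x : E) : radialWeight R x * ‖x‖ ≤ 1 :=
  inv_mul_le_one_of_le₀ (Real.le_sqrt_of_sq_le (by nlinarith [sq_nonneg R])) (by positivity)

variable [InnerProductSpace ℝ E]

lemma contDiff_radialWeight (hR : 0 < R) {n : WithTop ℕ∞} :
    ContDiff ℝ n (radialWeight R : E → ℝ) :=
  ((contDiff_const.add (contDiff_norm_sq ℝ)).sqrt fun x ↦ by positivity).inv
    fun x ↦ by positivity

lemma hasFDerivAt_radialWeight (hR : 0 < R) (x : E) :
    HasFDerivAt (radialWeight R) (-radialWeight R x ^ 3 • innerSL ℝ x) x := by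
  have hpos : 0 < R ^ 2 + ‖x‖ ^ 2 := by positivity
  have hsq : HasFDerivAt (fun y : E ↦ R ^ 2 + ‖y‖ ^ 2) (2 • innerSL ℝ x) x :=
    (hasStrictFDerivAt_norm_sq x).hasFDerivAt.const_add _
  have hinv := (hasDerivAt_inv (Real.sqrt_pos.2 hpos).ne').comp_hasFDerivAt x (hsq.sqrt hpos.ne')
  refine hinv.congr_fderiv ?_
  rw [two_nsmul, ← two_smul ℝ, smul_smul, smul_smul, radialWeight]
  congr 1
  have := (Real.sqrt_pos.2 hpos).ne'
  field_simp

end RadialWeight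

section MorawetzIdentity

variable {d : ℕ} {R : ℝ} {Z : Ed d → ℝ} {u : Ed d → ℂ}

/-- The constant `(d - 1) / 2` balancing the multiplier `x · ∇u + (d - 1) / 2 u`. -/
def virialConst (d : ℕ) : ℝ := ((d : ℝ) - 1) / 2

/-- The Morawetz multiplier at scale `R`, a smooth version of `∂_r u + (d - 1) / (2 |x|) u`.
The derivative `x · ∇u` is written `fderiv ℝ u x x`. -/
def morawetzMultiplier (R : ℝ) (u : Ed d → ℂ) (x : Ed d) : ℂ :=
  radialWeight R x • (fderiv ℝ u x x + virialConst d • u x)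

/-- The scalar density whose product with `x` is the radial part of the Morawetz flux. -/
def morawetzDensity (R : ℝ) (Z : Ed d → ℝ) (u : Ed d → ℂ) (x : Ed d) : ℝ :=
  1 / 2 * radialWeight R x * gradNorm u x ^ 2
    + (1 / 2 * Z x * radialWeight R x - virialConst d / 2 * radialWeight R x ^ 3) * ‖u x‖ ^ 2

/-- The components of the vector field whose divergence is the Morawetz identity for
`-Δ + Z`. -/
def morawetzFlux (R : ℝ) (Z : Ed d → ℝ) (u : Ed d → ℂ) (i : Fin d) (x : Ed d) : ℝ :=
  x i * morawetzDensity R Z u x - ⟪pd u i x, morawetzMultiplier R u x⟫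

/-- The quadratic form in `(∇u, u)` controlled by the Morawetz estimate at scale `R`. -/
def morawetzForm (R : ℝ) (Z : Ed d → ℝ) (u : Ed d → ℂ) (x : Ed d) : ℝ :=
  1 / 2 * R ^ 2 * radialWeight R x ^ 3 * (gradNorm u x ^ 2 - Z x * ‖u x‖ ^ 2)
    + virialConst d / 2 * (d * R ^ 2 + (d - 3) * ‖x‖ ^ 2) * radialWeight R x ^ 5 * ‖u x‖ ^ 2

lemma contDiff_morawetzMultiplier (hR : 0 < R) (hu : ContDiff ℝ 2 u) :
    ContDiff ℝ 1 (morawetzMultiplier R u) :=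
  (contDiff_radialWeight hR).smul
    ((contDiff_fderiv_apply_self hu).add ((hu.of_le one_le_two).const_smul _))

lemma contDiff_morawetzDensity (hR : 0 < R) (hZ : ContDiff ℝ 1 Z) (hu : ContDiff ℝ 2 u) :
    ContDiff ℝ 1 (morawetzDensity R Z u) := by
  have hβ : ContDiff ℝ 1 (radialWeight R : Ed d → ℝ) := contDiff_radialWeight hR
  have hN : ContDiff ℝ 1 fun x ↦ ‖u x‖ ^ 2 := (hu.of_le one_le_two).norm_sq ℝ
  have hG := contDiff_gradNorm_sq hu
  unfold morawetzDensity
  fun_prop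

lemma contDiff_morawetzFlux (hR : 0 < R) (hZ : ContDiff ℝ 1 Z) (hu : ContDiff ℝ 2 u)
    (i : Fin d) : ContDiff ℝ 1 (morawetzFlux R Z u i) :=
  ((contDiff_piLp_apply 2).mul (contDiff_morawetzDensity hR hZ hu)).sub
    ((contDiff_pd hu i).inner ℝ (contDiff_morawetzMultiplier hR hu))

lemma pd_morawetzMultiplier (hR : 0 < R) (hu : ContDiff ℝ 2 u) (i : Fin d) (x : Ed d) :
    pd (morawetzMultiplier R u) i x
      = radialWeight R x • (fderiv ℝ (pd u i) x x + (1 + virialConst d) • pd u i x)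
        - (x i * radialWeight R x ^ 3) • (fderiv ℝ u x x + virialConst d • u x) := by
  have hEu := (contDiff_fderiv_apply_self hu).differentiable one_ne_zero x
  have hud := hu.differentiable two_ne_zero x
  have hm := (hasFDerivAt_radialWeight hR x).smul
    (hEu.hasFDerivAt.add (hud.hasFDerivAt.const_smul (virialConst d)))
  have hfd : HasFDerivAt (morawetzMultiplier R u) _ x := hm
  have hpd : (fun y ↦ fderiv ℝ u y (EuclideanSpace.single i 1)) = pd u i := rfl
  rw [pd, hfd.fderiv]
  simp only [add_apply, smul_apply, fderiv_fderiv_apply_self hu,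
    ContinuousLinearMap.smulRight_apply, innerSL_apply_apply, hpd,
    EuclideanSpace.inner_single_right]
  simp only [pd, conj_trivial, one_mul, smul_eq_mul, Pi.add_apply, Pi.smul_apply]
  module

lemma sum_inner_pd_pd_morawetzMultiplier (hR : 0 < R) (hu : ContDiff ℝ 2 u) (x : Ed d) :
    ∑ i, ⟪pd u i x, pd (morawetzMultiplier R u) i x⟫
      = radialWeight R x * (1 / 2 * fderiv ℝ (fun y ↦ gradNorm u y ^ 2) x x
          + (1 + virialConst d) * gradNorm u x ^ 2)
        - radialWeight R x ^ 3 *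
          (‖fderiv ℝ u x x‖ ^ 2 + virialConst d * ⟪fderiv ℝ u x x, u x⟫) := by
  have heuler (w : ℂ) : ∑ i, x i * ⟪pd u i x, w⟫ = ⟪fderiv ℝ u x x, w⟫ := by
    rw [fderiv_apply_eq_sum_pd u x x, sum_inner]
    simp only [real_inner_smul_left]
  have hterm (i : Fin d) : ⟪pd u i x, pd (morawetzMultiplier R u) i x⟫
      = radialWeight R x * (⟪pd u i x, fderiv ℝ (pd u i) x x⟫
          + (1 + virialConst d) * ‖pd u i x‖ ^ 2)
        - radialWeight R x ^ 3 * (x i * ⟪pd u i x, fderiv ℝ u x x + virialConst d • u x⟫) := by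
    rw [pd_morawetzMultiplier hR hu, inner_sub_right, real_inner_smul_right,
      real_inner_smul_right, inner_add_right, real_inner_smul_right, real_inner_self_eq_norm_sq]
    ring
  simp_rw [hterm]
  rw [Finset.sum_sub_distrib, ← Finset.mul_sum, ← Finset.mul_sum, heuler,
    Finset.sum_add_distrib, ← Finset.mul_sum, ← gradNorm_sq, fderiv_gradNorm_sq_apply_self hu,
    inner_add_right, real_inner_smul_right, real_inner_self_eq_norm_sq]
  ring

lemma fderiv_morawetzDensity_apply_self (hR : 0 < R) (hZ : ContDiff ℝ 1 Z) (hu : ContDiff ℝ 2 u)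
    (x : Ed d) :
    fderiv ℝ (morawetzDensity R Z u) x x
      = 1 / 2 * (radialWeight R x * fderiv ℝ (fun y ↦ gradNorm u y ^ 2) x x
          - radialWeight R x ^ 3 * ‖x‖ ^ 2 * gradNorm u x ^ 2)
        + (Z x * radialWeight R x - virialConst d * radialWeight R x ^ 3)
          * ⟪fderiv ℝ u x x, u x⟫
        + (1 / 2 * fderiv ℝ Z x x * radialWeight R x
          - 1 / 2 * Z x * radialWeight R x ^ 3 * ‖x‖ ^ 2
          + 3 * virialConst d / 2 * radialWeight R x ^ 5 * ‖x‖ ^ 2) * ‖u x‖ ^ 2 := by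
  have hβ := hasFDerivAt_radialWeight hR x
  have hG := ((contDiff_gradNorm_sq hu).differentiable one_ne_zero x).hasFDerivAt
  have hN := ((hu.differentiable two_ne_zero x).hasFDerivAt).norm_sq
  have hZx := (hZ.differentiable one_ne_zero x).hasFDerivAt
  have hφ := ((hβ.const_mul (1 / 2)).mul hG).add
    ((((hZx.const_mul (1 / 2)).mul hβ).sub ((hβ.pow 3).const_mul (virialConst d / 2))).mul hN)
  have hφ' : HasFDerivAt (morawetzDensity R Z u) _ x := hφ
  rw [hφ'.fderiv, real_inner_comm]
  simp [-Complex.inner]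
  ring

theorem sum_fderiv_morawetzFlux (hR : 0 < R) (hZ : ContDiff ℝ 1 Z) (hu : ContDiff ℝ 2 u)
    (x : Ed d) :
    ∑ i, fderiv ℝ (morawetzFlux R Z u i) x (EuclideanSpace.single i 1)
      = ⟪-lap u x + Z x • u x, morawetzMultiplier R u x⟫
        + 1 / 2 * radialWeight R x * fderiv ℝ Z x x * ‖u x‖ ^ 2
        - radialWeight R x ^ 3 * (‖x‖ ^ 2 * gradNorm u x ^ 2 - ‖fderiv ℝ u x x‖ ^ 2)
        - morawetzForm R Z u x := by
  have hφ := contDiff_morawetzDensity hR hZ hu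
  have hm := contDiff_morawetzMultiplier hR hu
  have hsplit (i : Fin d) :
      fderiv ℝ (morawetzFlux R Z u i) x (EuclideanSpace.single i 1)
        = fderiv ℝ (fun y : Ed d ↦ y i * morawetzDensity R Z u y) x (EuclideanSpace.single i 1)
          - fderiv ℝ (fun y ↦ ⟪pd u i y, morawetzMultiplier R u y⟫) x
              (EuclideanSpace.single i 1) := by
    rw [← sub_apply, ← fderiv_fun_sub]
    · rfl
    · exact ((contDiff_piLp_apply 2).mul hφ).differentiable one_ne_zero x
    · exact ((contDiff_pd hu i).inner ℝ hm).differentiable one_ne_zero x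
  have hβ := radialWeight_sq_mul hR x
  simp_rw [hsplit]
  rw [Finset.sum_sub_distrib, sum_fderiv_coord_mul (hφ.differentiable one_ne_zero x),
    sum_fderiv_inner_pd hu (hm.differentiable one_ne_zero x),
    sum_inner_pd_pd_morawetzMultiplier hR hu, fderiv_morawetzDensity_apply_self hR hZ hu,
    inner_add_left, inner_neg_left]
  simp only [morawetzMultiplier, morawetzDensity, morawetzForm, virialConst,
    real_inner_smul_left, real_inner_smul_right, inner_add_right, real_inner_self_eq_norm_sq]
  rw [real_inner_comm (u x)]
  set β := radialWeight R x
  linear_combination (((d : ℝ) ^ 2 - d) / 4 * β ^ 3 * ‖u x‖ ^ 2 + 1 / 2 * β * gradNorm u x ^ 2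
    - 1 / 2 * Z x * β * ‖u x‖ ^ 2) * hβ

end MorawetzIdentity

section MorawetzEstimate

variable {d : ℕ} {R Zb e : ℝ} {Z b : Ed d → ℝ} {u : Ed d → ℂ}

/-- The operator `-Δ + Z + ie` of the resolvent equation, the spectral parameter being part of
`Z`. -/
def schrodingerOp (Z : Ed d → ℝ) (e : ℝ) (u : Ed d → ℂ) (x : Ed d) : ℂ :=
  -lap u x + Z x • u x + e • (Complex.I * u x)

lemma continuous_schrodingerOp (hZ : Continuous Z) (hu : ContDiff ℝ 2 u) :
    Continuous (schrodingerOp Z e u) :=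
  ((continuous_lap hu).neg.add (hZ.smul hu.continuous)).add
    ((continuous_const.mul hu.continuous).const_smul e)

lemma virialConst_nonneg (hd : 1 ≤ d) : 0 ≤ virialConst d := by
  have : (1 : ℝ) ≤ d := mod_cast hd
  unfold virialConst
  linarith

lemma real_inner_I_mul_mul_self (c z : ℂ) : ⟪Complex.I * z, c * z⟫ = c.im * ‖z‖ ^ 2 := by
  rw [Complex.inner, Complex.sq_norm, Complex.normSq_apply]
  simp only [Complex.mul_re, Complex.mul_im, Complex.conj_re, Complex.conj_im, Complex.I_re,
    Complex.I_im]
  ring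

lemma real_inner_I_mul_self (z : ℂ) : ⟪Complex.I * z, z⟫ = 0 := by
  simpa using real_inner_I_mul_mul_self 1 z

lemma radialWeight_mul_norm_fderiv_apply_self_le (R : ℝ) (u : Ed d → ℂ) (x : Ed d) :
    radialWeight R x * ‖fderiv ℝ u x x‖ ≤ gradNorm u x := by
  have hβ : 0 ≤ radialWeight R x := inv_nonneg.2 (Real.sqrt_nonneg _)
  calc radialWeight R x * ‖fderiv ℝ u x x‖
      ≤ radialWeight R x * (‖x‖ * gradNorm u x) := by
        gcongr
        exact norm_fderiv_apply_le u x x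
    _ = radialWeight R x * ‖x‖ * gradNorm u x := by ring
    _ ≤ gradNorm u x :=
        mul_le_of_le_one_left (gradNorm_nonneg u x) (radialWeight_mul_norm_le_one R x)

lemma norm_morawetzMultiplier_le (hd : 1 ≤ d) (hR : 0 < R) (u : Ed d → ℂ) (x : Ed d) :
    ‖morawetzMultiplier R u x‖ ≤ gradNorm u x + virialConst d * (radialWeight R x * ‖u x‖) := by
  have hβ := radialWeight_pos hR x
  calc ‖morawetzMultiplier R u x‖
      ≤ radialWeight R x * (‖fderiv ℝ u x x‖ + virialConst d * ‖u x‖) := by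
        rw [morawetzMultiplier, norm_smul, Real.norm_of_nonneg hβ.le]
        gcongr
        refine (norm_add_le _ _).trans_eq ?_
        rw [norm_smul, Real.norm_of_nonneg (virialConst_nonneg hd)]
    _ = radialWeight R x * ‖fderiv ℝ u x x‖ + virialConst d * (radialWeight R x * ‖u x‖) := by
        ring
    _ ≤ _ := by
        gcongr
        exact radialWeight_mul_norm_fderiv_apply_self_le R u x

lemma neg_inner_I_mul_morawetzMultiplier_le (hR : 0 < R) (e : ℝ) (u : Ed d → ℂ) (x : Ed d) :
    -(e * ⟪Complex.I * u x, morawetzMultiplier R u x⟫) ≤ |e| * (‖u x‖ * gradNorm u x) := by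
  have hβ := radialWeight_pos hR x
  have hinner : ⟪Complex.I * u x, morawetzMultiplier R u x⟫
      = ⟪Complex.I * u x, radialWeight R x • fderiv ℝ u x x⟫ := by
    rw [morawetzMultiplier, real_inner_smul_right, inner_add_right, real_inner_smul_right,
      real_inner_I_mul_self, real_inner_smul_right]
    ring
  rw [hinner, ← neg_mul]
  calc -e * ⟪Complex.I * u x, radialWeight R x • fderiv ℝ u x x⟫
      ≤ |e| * (‖Complex.I * u x‖ * ‖radialWeight R x • fderiv ℝ u x x‖) := by
        refine (le_abs_self _).trans ?_
        rw [abs_mul, abs_neg]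
        gcongr
        exact abs_real_inner_le_norm _ _
    _ ≤ |e| * (‖u x‖ * gradNorm u x) := by
        rw [norm_mul, Complex.norm_I, one_mul, norm_smul, Real.norm_of_nonneg hβ.le]
        gcongr
        exact radialWeight_mul_norm_fderiv_apply_self_le R u x

lemma sum_fderiv_morawetzFlux_le (hd : 1 ≤ d) (hR : 0 < R) (hZ : ContDiff ℝ 1 Z)
    (hu : ContDiff ℝ 2 u) (e : ℝ) {x : Ed d} (hb : 0 ≤ b x) (hZb : fderiv ℝ Z x x ≤ ‖x‖ * b x) :
    ∑ i, fderiv ℝ (morawetzFlux R Z u i) x (EuclideanSpace.single i 1)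
      ≤ 1 / 2 * (b x * ‖u x‖ ^ 2) + ‖schrodingerOp Z e u x‖ * gradNorm u x
        + virialConst d * (‖schrodingerOp Z e u x‖ * (radialWeight R x * ‖u x‖))
        + |e| * (‖u x‖ * gradNorm u x) - morawetzForm R Z u x := by
  have hβ := radialWeight_pos hR x
  have hsource : ⟪schrodingerOp Z e u x, morawetzMultiplier R u x⟫
      ≤ ‖schrodingerOp Z e u x‖ * (gradNorm u x + virialConst d * (radialWeight R x * ‖u x‖)) :=
    (real_inner_le_norm _ _).trans (by gcongr; exact norm_morawetzMultiplier_le hd hR u x)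
  have hop : ⟪-lap u x + Z x • u x, morawetzMultiplier R u x⟫
      = ⟪schrodingerOp Z e u x, morawetzMultiplier R u x⟫
        - e * ⟪Complex.I * u x, morawetzMultiplier R u x⟫ := by
    rw [schrodingerOp, inner_add_left _ (e • _), real_inner_smul_left]
    ring
  have hpot : radialWeight R x * fderiv ℝ Z x x ≤ b x :=
    calc radialWeight R x * fderiv ℝ Z x x ≤ radialWeight R x * (‖x‖ * b x) := by gcongr
      _ = radialWeight R x * ‖x‖ * b x := by ring
      _ ≤ b x := mul_le_of_le_one_left hb (radialWeight_mul_norm_le_one R x)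
  have hangular : 0 ≤ radialWeight R x ^ 3
      * (‖x‖ ^ 2 * gradNorm u x ^ 2 - ‖fderiv ℝ u x x‖ ^ 2) := by
    rw [← mul_pow]
    have := pow_le_pow_left₀ (norm_nonneg _) (norm_fderiv_apply_le u x x) 2
    exact mul_nonneg (by positivity) (by linarith)
  have hpot_mul := mul_le_mul_of_nonneg_right hpot (sq_nonneg ‖u x‖)
  rw [sum_fderiv_morawetzFlux hR hZ hu, hop]
  linarith [neg_inner_I_mul_morawetzMultiplier_le hR e u x]

lemma abs_coord_mul_morawetzDensity_le (hd : 1 ≤ d) (hR : 0 < R) (hZb : ∀ x, |Z x| ≤ Zb)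
    (u : Ed d → ℂ) (i : Fin d) (x : Ed d) :
    |x i * morawetzDensity R Z u x|
      ≤ 1 / 2 * gradNorm u x ^ 2 + (1 / 2 * Zb + virialConst d / 2 * R⁻¹ ^ 2) * ‖u x‖ ^ 2 := by
  have hκ := virialConst_nonneg hd
  have hβ := radialWeight_pos hR x
  have hcoord : radialWeight R x * |x i| ≤ 1 :=
    (mul_le_mul_of_nonneg_left (PiLp.norm_apply_le x i) hβ.le).trans
      (radialWeight_mul_norm_le_one R x)
  have hdens : |1 / 2 * gradNorm u x ^ 2
        + (1 / 2 * Z x - virialConst d / 2 * radialWeight R x ^ 2) * ‖u x‖ ^ 2|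
      ≤ 1 / 2 * gradNorm u x ^ 2 + (1 / 2 * Zb + virialConst d / 2 * R⁻¹ ^ 2) * ‖u x‖ ^ 2 := by
    have hβ2 : radialWeight R x ^ 2 ≤ R⁻¹ ^ 2 :=
      pow_le_pow_left₀ hβ.le (radialWeight_le_inv hR x) 2
    refine (abs_add_le _ _).trans ?_
    rw [abs_of_nonneg (by positivity : 0 ≤ 1 / 2 * gradNorm u x ^ 2), abs_mul,
      abs_of_nonneg (sq_nonneg ‖u x‖)]
    gcongr
    refine (abs_sub _ _).trans ?_
    rw [abs_mul, abs_of_nonneg (by positivity : 0 ≤ virialConst d / 2 * radialWeight R x ^ 2),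
      abs_of_pos one_half_pos]
    gcongr
    exact hZb x
  calc |x i * morawetzDensity R Z u x|
      = radialWeight R x * |x i| * |1 / 2 * gradNorm u x ^ 2
        + (1 / 2 * Z x - virialConst d / 2 * radialWeight R x ^ 2) * ‖u x‖ ^ 2| := by
        rw [← abs_of_pos hβ, ← abs_mul, ← abs_mul, morawetzDensity, abs_of_pos hβ]
        congr 1
        ring
    _ ≤ _ := (mul_le_of_le_one_left (abs_nonneg _) hcoord).trans hdens

lemma memLp_radialWeight_mul_norm (hR : 0 < R) (hu2 : MemLp u 2) :
    MemLp (fun x ↦ radialWeight R x * ‖u x‖) 2 := by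
  have hβ : Continuous (radialWeight R : Ed d → ℝ) :=
    (contDiff_radialWeight hR (n := 0)).continuous
  refine hu2.of_le_mul (c := R⁻¹) (hβ.aestronglyMeasurable.mul hu2.1.norm) (.of_forall fun x ↦ ?_)
  rw [norm_mul, norm_norm, Real.norm_of_nonneg (radialWeight_pos hR x).le]
  gcongr
  exact radialWeight_le_inv hR x

lemma abs_virial_coeff_le (hd : 1 ≤ d) (hR : 0 < R) (x : Ed d) :
    |virialConst d / 2 * (d * R ^ 2 + (d - 3) * ‖x‖ ^ 2) * radialWeight R x ^ 5|
      ≤ virialConst d / 2 * (d + 3) * R⁻¹ ^ 3 := by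
  have hκ := virialConst_nonneg hd
  have hβ := radialWeight_pos hR x
  have hpoly : |(d : ℝ) * R ^ 2 + (d - 3) * ‖x‖ ^ 2| ≤ (d + 3) * (R ^ 2 + ‖x‖ ^ 2) := by
    have := mul_nonneg (Nat.cast_nonneg (α := ℝ) d) (sq_nonneg ‖x‖)
    have := mul_nonneg (Nat.cast_nonneg (α := ℝ) d) (sq_nonneg R)
    exact abs_le.2 ⟨by nlinarith, by nlinarith⟩
  rw [abs_mul, abs_mul, abs_of_nonneg (by positivity : 0 ≤ virialConst d / 2),
    abs_of_pos (pow_pos hβ 5)]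
  calc virialConst d / 2 * |(d : ℝ) * R ^ 2 + (d - 3) * ‖x‖ ^ 2| * radialWeight R x ^ 5
      ≤ virialConst d / 2 * ((d + 3) * (R ^ 2 + ‖x‖ ^ 2)) * radialWeight R x ^ 5 := by gcongr
    _ = virialConst d / 2 * (d + 3) * radialWeight R x ^ 3
        * (radialWeight R x ^ 2 * (R ^ 2 + ‖x‖ ^ 2)) := by ring
    _ = virialConst d / 2 * (d + 3) * radialWeight R x ^ 3 := by
        rw [radialWeight_sq_mul hR, mul_one]
    _ ≤ _ := by
        gcongr
        exact radialWeight_le_inv hR x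

lemma integrable_morawetzFlux (hu2 : MemLp u 2) (hg2 : MemLp (gradNorm u) 2)
    (hd : 1 ≤ d) (hR : 0 < R) (hZ : ContDiff ℝ 1 Z)
    (hZb : ∀ x, |Z x| ≤ Zb) (hu : ContDiff ℝ 2 u) (i : Fin d) :
    Integrable (morawetzFlux R Z u i) := by
  have hφ := (contDiff_morawetzDensity hR hZ hu).continuous
  have hm := (contDiff_morawetzMultiplier hR hu).continuous
  refine Integrable.sub ?_ ?_
  · exact ((hg2.integrable_sq.const_mul (1 / 2)).add (hu2.norm.integrable_sq.const_mul
      (1 / 2 * Zb + virialConst d / 2 * R⁻¹ ^ 2))).mono'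
      (Continuous.aestronglyMeasurable (by fun_prop))
      (.of_forall fun x ↦ abs_coord_mul_morawetzDensity_le hd hR hZb u i x)
  · have hmul : Integrable fun x ↦
        gradNorm u x * (gradNorm u x + virialConst d * (radialWeight R x * ‖u x‖)) :=
      hg2.integrable_mul (hg2.add ((memLp_radialWeight_mul_norm hR hu2).const_mul _))
    refine hmul.mono' ((contDiff_pd hu i).continuous.inner hm).aestronglyMeasurable
      (.of_forall fun x ↦ ?_)
    exact (abs_real_inner_le_norm _ _).trans (mul_le_mul (norm_pd_le_gradNorm u i x)
      (norm_morawetzMultiplier_le hd hR u x) (norm_nonneg _) (gradNorm_nonneg u x))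

lemma integrable_morawetzForm (hu2 : MemLp u 2) (hg2 : MemLp (gradNorm u) 2)
    (hd : 1 ≤ d) (hR : 0 < R) (hZ : Continuous Z)
    (hZb : ∀ x, |Z x| ≤ Zb) : Integrable (morawetzForm R Z u) := by
  have hβ : Continuous (radialWeight R : Ed d → ℝ) :=
    (contDiff_radialWeight hR (n := 0)).continuous
  refine Integrable.add ?_ ?_
  · refine (hg2.integrable_sq.sub (hu2.norm.integrable_sq.bdd_mul hZ.aestronglyMeasurable
      (.of_forall hZb))).bdd_mul (c := 1 / 2 * R ^ 2 * R⁻¹ ^ 3)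
      (Continuous.aestronglyMeasurable (by fun_prop)) (.of_forall fun x ↦ ?_)
    have := radialWeight_pos hR x
    rw [Real.norm_of_nonneg (by positivity)]
    gcongr
    exact radialWeight_le_inv hR x
  · exact hu2.norm.integrable_sq.bdd_mul (Continuous.aestronglyMeasurable (by fun_prop))
      (.of_forall fun x ↦ abs_virial_coeff_le hd hR x)

theorem integral_morawetzForm_le (hu2 : MemLp u 2) (hg2 : MemLp (gradNorm u) 2)
    (hd : 1 ≤ d) (hR : 0 < R) (hZ : ContDiff ℝ 1 Z)
    (hZb : ∀ x, |Z x| ≤ Zb) (hu : ContDiff ℝ 2 u) (hh2 : MemLp (schrodingerOp Z e u) 2)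
    (hb : ∀ x, 0 ≤ b x) (hbu : Integrable fun x ↦ b x * ‖u x‖ ^ 2)
    (hZr : ∀ x, fderiv ℝ Z x x ≤ ‖x‖ * b x) :
    ∫ x, morawetzForm R Z u x
      ≤ 1 / 2 * (∫ x, b x * ‖u x‖ ^ 2) + (∫ x, ‖schrodingerOp Z e u x‖ * gradNorm u x)
        + virialConst d * (∫ x, ‖schrodingerOp Z e u x‖ * (radialWeight R x * ‖u x‖))
        + |e| * ∫ x, ‖u x‖ * gradNorm u x := by
  have hbu' := hbu.const_mul (1 / 2)
  have hhg : Integrable fun x ↦ ‖schrodingerOp Z e u x‖ * gradNorm u x :=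
    hh2.norm.integrable_mul hg2
  have hhu := (hh2.norm.integrable_mul (memLp_radialWeight_mul_norm hR hu2)).const_mul
    (virialConst d)
  have hug := (hu2.norm.integrable_mul hg2).const_mul |e|
  have hform := integrable_morawetzForm hu2 hg2 hd hR hZ.continuous hZb
  have hdiv := integral_nonneg_of_sum_fderiv_le (μ := volume)
    (fun i ↦ EuclideanSpace.single i (1 : ℝ)) (contDiff_morawetzFlux hR hZ hu)
    (integrable_morawetzFlux hu2 hg2 hd hR hZ hZb hu)
    ((((hbu'.add hhg).add hhu).add hug).sub hform)
    fun x ↦ sum_fderiv_morawetzFlux_le hd hR hZ hu e (hb x) (hZr x)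
  rw [integral_sub' (((hbu'.add hhg).add hhu).add hug) hform, integral_add' ((hbu'.add hhg).add hhu)
    hug, integral_add' (hbu'.add hhg) hhu, integral_add' hbu' hhg, integral_const_mul,
    integral_const_mul, integral_const_mul] at hdiv
  exact sub_nonneg.1 hdiv

end MorawetzEstimate

/-! ### Energy estimates -/

section Energy

variable {d : ℕ} {Zb e L : ℝ} {Z : Ed d → ℝ} {u : Ed d → ℂ}

lemma real_inner_mul_self (c z : ℂ) : ⟪z, c * z⟫ = c.re * ‖z‖ ^ 2 := by
  rw [Complex.inner, Complex.sq_norm, Complex.normSq_apply]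
  simp only [Complex.mul_re, Complex.mul_im, Complex.conj_re, Complex.conj_im]
  ring

lemma pd_const_mul (hu : Differentiable ℝ u) (c : ℂ) (i : Fin d) (x : Ed d) :
    pd (fun y ↦ c * u y) i x = c * pd u i x := by
  simp [pd, fderiv_const_mul (hu x)]

lemma sum_fderiv_neg_inner_pd_mul_le (hu : ContDiff ℝ 2 u) (Z : Ed d → ℝ) (e : ℝ) (c : ℂ)
    (x : Ed d) :
    ∑ i, fderiv ℝ (fun y ↦ -⟪pd u i y, c * u y⟫) x (EuclideanSpace.single i 1)
      ≤ ‖c‖ * (‖schrodingerOp Z e u x‖ * ‖u x‖)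
        - (c.re * (gradNorm u x ^ 2 + Z x * ‖u x‖ ^ 2) + e * c.im * ‖u x‖ ^ 2) := by
  have hdu := hu.differentiable two_ne_zero
  have hsource : ⟪schrodingerOp Z e u x, c * u x⟫
      ≤ ‖c‖ * (‖schrodingerOp Z e u x‖ * ‖u x‖) :=
    (real_inner_le_norm _ _).trans_eq (by rw [norm_mul]; ring)
  have hop : ⟪schrodingerOp Z e u x, c * u x⟫ = -⟪lap u x, c * u x⟫
      + Z x * (c.re * ‖u x‖ ^ 2) + e * (c.im * ‖u x‖ ^ 2) := by
    rw [schrodingerOp, inner_add_left, inner_add_left, inner_neg_left, real_inner_smul_left,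
      real_inner_smul_left, real_inner_mul_self, real_inner_I_mul_mul_self]
  simp only [fderiv_fun_neg, neg_apply, Finset.sum_neg_distrib]
  rw [sum_fderiv_inner_pd hu ((hdu x).const_mul c)]
  simp only [pd_const_mul hdu, real_inner_mul_self, ← Finset.mul_sum, ← gradNorm_sq]
  linarith

-- The divergence theorem for `-⟨∇u, c u⟩`; the phase `c` selects the energy (`c = 1`) or the
-- flux (`c = ± i`) identity.
theorem energy_le (hu : ContDiff ℝ 2 u) (hu2 : MemLp u 2) (hg2 : MemLp (gradNorm u) 2)
    (hZ : Continuous Z) (hZb : ∀ x, |Z x| ≤ Zb) (hh2 : MemLp (schrodingerOp Z e u) 2)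
    (c : ℂ) :
    c.re * (∫ x, gradNorm u x ^ 2 + Z x * ‖u x‖ ^ 2) + e * c.im * (∫ x, ‖u x‖ ^ 2)
      ≤ ‖c‖ * ∫ x, ‖schrodingerOp Z e u x‖ * ‖u x‖ := by
  have hflux (i : Fin d) : ContDiff ℝ 1 fun x ↦ -⟪pd u i x, c * u x⟫ :=
    ((contDiff_pd hu i).inner ℝ (contDiff_const.mul (hu.of_le one_le_two))).neg
  have hflux_int (i : Fin d) : Integrable fun x ↦ -⟪pd u i x, c * u x⟫ := by
    refine ((hg2.integrable_mul hu2.norm).const_mul ‖c‖).mono'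
      (hflux i).continuous.aestronglyMeasurable (.of_forall fun x ↦ ?_)
    rw [norm_neg]
    calc ‖⟪pd u i x, c * u x⟫‖ ≤ ‖pd u i x‖ * ‖c * u x‖ := norm_inner_le_norm _ _
      _ ≤ gradNorm u x * ‖c * u x‖ := by
        gcongr
        exact norm_pd_le_gradNorm u i x
      _ = ‖c‖ * (gradNorm u x * ‖u x‖) := by rw [norm_mul]; ring
  have hhu := (hh2.norm.integrable_mul hu2.norm).const_mul ‖c‖
  have hquad := (hg2.integrable_sq.add
    (hu2.norm.integrable_sq.bdd_mul hZ.aestronglyMeasurable (.of_forall hZb))).const_mul c.re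
  have hmass := hu2.norm.integrable_sq.const_mul (e * c.im)
  have hdiv := integral_nonneg_of_sum_fderiv_le (μ := volume)
    (fun i ↦ EuclideanSpace.single i (1 : ℝ)) hflux hflux_int (hhu.sub (hquad.add hmass))
    fun x ↦ sum_fderiv_neg_inner_pd_mul_le hu Z e c x
  rw [integral_sub' hhu (hquad.add hmass), integral_add' hquad hmass, integral_const_mul,
    integral_const_mul, integral_const_mul] at hdiv
  exact sub_nonneg.1 hdiv

lemma abs_mul_integral_norm_sq_le (hu : ContDiff ℝ 2 u) (hu2 : MemLp u 2)
    (hg2 : MemLp (gradNorm u) 2) (hZ : Continuous Z) (hZb : ∀ x, |Z x| ≤ Zb)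
    (hh2 : MemLp (schrodingerOp Z e u) 2) :
    |e| * (∫ x, ‖u x‖ ^ 2) ≤ ∫ x, ‖schrodingerOp Z e u x‖ * ‖u x‖ := by
  have hplus := energy_le hu hu2 hg2 hZ hZb hh2 Complex.I
  have hminus := energy_le hu hu2 hg2 hZ hZb hh2 (-Complex.I)
  simp only [Complex.neg_re, Complex.neg_im, Complex.I_re, Complex.I_im, norm_neg,
    Complex.norm_I, one_mul, mul_one, neg_zero, zero_mul, zero_add, mul_neg] at hplus hminus
  rcases abs_cases e with ⟨he, -⟩ | ⟨he, -⟩ <;> rwa [he]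

lemma integral_gradNorm_sq_le (hu : ContDiff ℝ 2 u) (hu2 : MemLp u 2) (hg2 : MemLp (gradNorm u) 2)
    (hZ : Continuous Z) (hZb : ∀ x, |Z x| ≤ Zb) (hh2 : MemLp (schrodingerOp Z e u) 2)
    (hL : ∀ x, -Z x ≤ L) :
    ∫ x, gradNorm u x ^ 2
      ≤ L * (∫ x, ‖u x‖ ^ 2) + ∫ x, ‖schrodingerOp Z e u x‖ * ‖u x‖ := by
  have hre := energy_le hu hu2 hg2 hZ hZb hh2 1
  have hZu : Integrable fun x ↦ Z x * ‖u x‖ ^ 2 :=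
    hu2.norm.integrable_sq.bdd_mul hZ.aestronglyMeasurable (.of_forall hZb)
  simp only [Complex.one_re, Complex.one_im, norm_one, one_mul, mul_zero, zero_mul,
    add_zero] at hre
  rw [integral_add hg2.integrable_sq hZu] at hre
  have hpot : ∫ x, -(Z x * ‖u x‖ ^ 2) ≤ ∫ x, L * ‖u x‖ ^ 2 := by
    refine integral_mono hZu.neg (hu2.norm.integrable_sq.const_mul L) fun x ↦ ?_
    linarith [mul_le_mul_of_nonneg_right (hL x) (sq_nonneg ‖u x‖)]
  rw [integral_neg, integral_const_mul] at hpot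
  linarith

lemma abs_mul_integral_norm_mul_gradNorm_le (hu : ContDiff ℝ 2 u) (hu2 : MemLp u 2)
    (hg2 : MemLp (gradNorm u) 2) (hZ : Continuous Z) (hZb : ∀ x, |Z x| ≤ Zb)
    (hh2 : MemLp (schrodingerOp Z e u) 2) (hL : ∀ x, -Z x ≤ L) (hL0 : 0 ≤ L) {t : ℝ}
    (ht : 0 < t) (hLt : L + |e| ≤ t ^ 2) :
    |e| * (∫ x, ‖u x‖ * gradNorm u x) ≤ t * ∫ x, ‖schrodingerOp Z e u x‖ * ‖u x‖ := by
  have hmass := abs_mul_integral_norm_sq_le hu hu2 hg2 hZ hZb hh2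
  have hgrad := integral_gradNorm_sq_le hu hu2 hg2 hZ hZb hh2 hL
  set S := ∫ x, ‖schrodingerOp Z e u x‖ * ‖u x‖
  set N := ∫ x, ‖u x‖ ^ 2
  have : 0 ≤ N := integral_nonneg fun x ↦ by positivity
  have young : ∫ x, ‖u x‖ * gradNorm u x ≤ t / 2 * N + t⁻¹ / 2 * ∫ x, gradNorm u x ^ 2 := by
    have iN := hu2.norm.integrable_sq.const_mul (t / 2)
    have iG := hg2.integrable_sq.const_mul (t⁻¹ / 2)
    rw [← integral_const_mul, ← integral_const_mul, ← integral_add iN iG]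
    refine integral_mono (hu2.norm.integrable_mul hg2) (iN.add iG) fun x ↦ ?_
    have := mul_nonneg (inv_nonneg.2 ht.le) (sq_nonneg (t * ‖u x‖ - gradNorm u x))
    have hcancel : t⁻¹ * (t * ‖u x‖ - gradNorm u x) ^ 2
        = t * ‖u x‖ ^ 2 - 2 * (‖u x‖ * gradNorm u x) + t⁻¹ * gradNorm u x ^ 2 := by
      field_simp
      ring
    dsimp only
    linarith
  have hgrad' : |e| * ∫ x, gradNorm u x ^ 2 ≤ t ^ 2 * S :=
    calc |e| * ∫ x, gradNorm u x ^ 2 ≤ |e| * (L * N + S) := by gcongr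
      _ = L * (|e| * N) + |e| * S := by ring
      _ ≤ t ^ 2 * S := by
        have : 0 ≤ S := (by positivity : 0 ≤ |e| * N).trans hmass
        calc L * (|e| * N) + |e| * S ≤ L * S + |e| * S := by gcongr
          _ = (L + |e|) * S := by ring
          _ ≤ t ^ 2 * S := by gcongr
  calc |e| * (∫ x, ‖u x‖ * gradNorm u x)
      ≤ |e| * (t / 2 * N + t⁻¹ / 2 * ∫ x, gradNorm u x ^ 2) := by gcongr
    _ = t / 2 * (|e| * N) + t⁻¹ / 2 * (|e| * ∫ x, gradNorm u x ^ 2) := by ring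
    _ ≤ t / 2 * S + t⁻¹ / 2 * (t ^ 2 * S) := by gcongr
    _ = t * S := by field_simp; ring

end Energy

/-! ### Morrey–Campanato suprema and dyadic duality -/

section Morrey

variable {d : ℕ} {ρ R : ℝ} {g : Ed d → ℝ≥0∞}

/-- The supremum `sup_{R ≥ ρ} R⁻ᵖ ∫_{B(0,R)} g`. The exponent `p = 1` is the squared norm of
`X_ρ`; the exponent `p = 3` is the volume form of `sup_{R ≥ ρ} R⁻² ∫_{|x|=R} g`. -/
def morreySup (p : ℕ) (ρ : ℝ) (g : Ed d → ℝ≥0∞) : ℝ≥0∞ :=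
  ⨆ (R : ℝ) (_ : ρ ≤ R), (ENNReal.ofReal (R ^ p))⁻¹ * ∫⁻ x in ball (0 : Ed d) R, g x

lemma nX2r_eq_morreySup (ρ : ℝ) (g : Ed d → ℝ≥0∞) : nX2r ρ g = morreySup 1 ρ g := by
  simp [nX2r, morreySup]

lemma lintegral_ball_le_morreySup (p : ℕ) (hρ : 0 < ρ) (hR : ρ ≤ R) (g : Ed d → ℝ≥0∞) :
    ∫⁻ x in ball (0 : Ed d) R, g x ≤ ENNReal.ofReal (R ^ p) * morreySup p ρ g := by
  have h : (ENNReal.ofReal (R ^ p))⁻¹ * ∫⁻ x in ball (0 : Ed d) R, g x ≤ morreySup p ρ g :=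
    le_iSup₂ (f := fun (R : ℝ) (_ : ρ ≤ R) ↦
      (ENNReal.ofReal (R ^ p))⁻¹ * ∫⁻ x in ball (0 : Ed d) R, g x) R hR
  rwa [← ENNReal.div_eq_inv_mul, ENNReal.div_le_iff'
    (by simpa using pow_pos (hρ.trans_le hR) p) ENNReal.ofReal_ne_top] at h

lemma morreySup_le {p : ℕ} {K : ℝ≥0∞}
    (h : ∀ R, ρ ≤ R → ∫⁻ x in ball (0 : Ed d) R, g x ≤ ENNReal.ofReal (R ^ p) * K) :
    morreySup p ρ g ≤ K := by
  refine iSup₂_le fun R hR ↦ ?_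
  rw [← ENNReal.div_eq_inv_mul]
  exact ENNReal.div_le_of_le_mul' (h R hR)

lemma morreySup_ne_top (p : ℕ) (hρ : 0 < ρ) (hg : ∫⁻ x, g x ≠ ⊤) : morreySup p ρ g ≠ ⊤ := by
  refine ne_top_of_le_ne_top (ENNReal.mul_ne_top
    (ENNReal.inv_ne_top.2 (by simpa using pow_pos hρ p)) hg)
    (iSup₂_le fun R hR ↦ ?_ : _ ≤ (ENNReal.ofReal (ρ ^ p))⁻¹ * ∫⁻ x, g x)
  gcongr
  exact Measure.restrict_le_self

end Morrey

section Dyadic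

variable {d : ℕ} {ρ R : ℝ} {g : Ed d → ℝ≥0∞} {K : ℝ≥0∞}

/-- `g` has mass at most `2^{j+1} K` on every shell `C_j`, `j ≥ jIdx ρ`, and at most `ρ K` on the
ball of radius `ρ`. This is the form in which membership in `X_ρ` is paired with `X*_ρ`. -/
def HasDyadicMassLE (ρ : ℝ) (g : Ed d → ℝ≥0∞) (K : ℝ≥0∞) : Prop :=
  (∀ j, jIdx ρ ≤ j → ∫⁻ x in shell d j, g x ≤ ENNReal.ofReal ((2 : ℝ) ^ (j + 1)) * K) ∧
    ∫⁻ x in ball (0 : Ed d) ρ, g x ≤ ENNReal.ofReal ρ * K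

lemma two_zpow_jIdx_lt (hρ : 0 < ρ) : (2 : ℝ) ^ jIdx ρ < ρ := by
  rw [← Real.rpow_intCast, ← Real.lt_logb_iff_rpow_lt one_lt_two hρ, jIdx]
  push_cast
  linarith [Int.ceil_lt_add_one (Real.logb 2 ρ)]

lemma le_two_zpow_jIdx_add_one (hρ : 0 < ρ) : ρ ≤ (2 : ℝ) ^ (jIdx ρ + 1) := by
  rw [← Real.rpow_intCast, ← Real.logb_le_iff_le_rpow one_lt_two hρ, jIdx, sub_add_cancel]
  exact Int.le_ceil _

lemma jIdx_mono (hρ : 0 < ρ) (hR : ρ ≤ R) : jIdx ρ ≤ jIdx R :=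
  Int.sub_le_sub_right (Int.ceil_le_ceil (Real.logb_le_logb_of_le one_lt_two hρ hR)) 1

lemma measurableSet_shell (d : ℕ) (j : ℤ) : MeasurableSet (shell d j) :=
  (measurableSet_lt measurable_const measurable_norm).inter
    (measurableSet_le measurable_norm measurable_const)

lemma iUnion_shell_union_ball (hρ : 0 < ρ) :
    (⋃ j : {j : ℤ // jIdx ρ ≤ j}, shell d j) ∪ ball (0 : Ed d) ρ = univ := by
  refine eq_univ_of_forall fun x ↦ ?_
  rcases lt_or_ge ‖x‖ ρ with hx | hx
  · exact .inr (mem_ball_zero_iff.2 hx)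
  · have hx0 := hρ.trans_le hx
    exact .inl (mem_iUnion.2 ⟨⟨jIdx ‖x‖, jIdx_mono hρ hx⟩, two_zpow_jIdx_lt hx0,
      le_two_zpow_jIdx_add_one hx0⟩)

lemma lintegral_le_tsum_shell_add_ball (hρ : 0 < ρ) (φ : Ed d → ℝ≥0∞) :
    ∫⁻ x, φ x ≤ (∑' j : {j : ℤ // jIdx ρ ≤ j}, ∫⁻ x in shell d j, φ x)
      + ∫⁻ x in ball (0 : Ed d) ρ, φ x := by
  rw [← setLIntegral_univ, ← iUnion_shell_union_ball (d := d) hρ]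
  refine (lintegral_union_le _ _ _).trans ?_
  gcongr
  exact lintegral_iUnion_le _ _

lemma lintegral_mul_le_of_lintegral_sq_le {α : Type*} [MeasurableSpace α] {μ : Measure α}
    {F G : α → ℝ≥0∞} (hF : AEMeasurable F μ) (hG : AEMeasurable G μ) {c : ℝ≥0∞}
    (h : ∫⁻ x, G x ^ 2 ∂μ ≤ c * K) :
    ∫⁻ x, F x * G x ∂μ ≤ (c * ∫⁻ x, F x ^ 2 ∂μ) ^ (1 / 2 : ℝ) * K ^ (1 / 2 : ℝ) := by
  have holder := ENNReal.lintegral_mul_le_Lp_mul_Lq μ Real.HolderConjugate.two_two hF hG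
  simp only [ENNReal.rpow_two, Pi.mul_apply] at holder
  calc ∫⁻ x, F x * G x ∂μ
      ≤ (∫⁻ x, F x ^ 2 ∂μ) ^ (1 / 2 : ℝ) * (∫⁻ x, G x ^ 2 ∂μ) ^ (1 / 2 : ℝ) := holder
    _ ≤ (∫⁻ x, F x ^ 2 ∂μ) ^ (1 / 2 : ℝ) * (c * K) ^ (1 / 2 : ℝ) := by gcongr
    _ = _ := by
      rw [ENNReal.mul_rpow_of_nonneg _ _ (by norm_num),
        ENNReal.mul_rpow_of_nonneg _ _ (by norm_num)]
      ring

theorem lintegral_mul_le_nXstarr_mul {F G : Ed d → ℝ≥0∞} (hρ : 0 < ρ) (hF : Measurable F)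
    (hG : Measurable G) (h : HasDyadicMassLE ρ (fun x ↦ G x ^ 2) K) :
    ∫⁻ x, F x * G x ≤ nXstarr ρ (fun x ↦ F x ^ 2) * K ^ (1 / 2 : ℝ) := by
  refine (lintegral_le_tsum_shell_add_ball hρ _).trans ?_
  rw [nXstarr, add_mul, ← ENNReal.tsum_mul_right]
  gcongr with j
  · exact lintegral_mul_le_of_lintegral_sq_le hF.aemeasurable hG.aemeasurable (h.1 j j.2)
  · exact lintegral_mul_le_of_lintegral_sq_le hF.aemeasurable hG.aemeasurable h.2

lemma nXstarr_mono (ρ : ℝ) {g₁ g₂ : Ed d → ℝ≥0∞} (h : ∀ x, g₁ x ≤ g₂ x) :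
    nXstarr ρ g₁ ≤ nXstarr ρ g₂ := by
  unfold nXstarr
  gcongr <;> exact h _

lemma shell_subset_ball (d : ℕ) (j : ℤ) :
    shell d j ⊆ ball (0 : Ed d) (2 * (2 : ℝ) ^ (j + 1)) := by
  intro x hx
  have : (0 : ℝ) < 2 ^ (j + 1) := by positivity
  rw [mem_ball_zero_iff]
  linarith [hx.2]

lemma le_two_mul_two_zpow (hρ : 0 < ρ) {j : ℤ} (hj : jIdx ρ ≤ j) :
    ρ ≤ 2 * (2 : ℝ) ^ (j + 1) := by
  have : (2 : ℝ) ^ (jIdx ρ + 1) ≤ 2 ^ (j + 1) := zpow_le_zpow_right₀ one_le_two (by lia)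
  have : (0 : ℝ) < 2 ^ (j + 1) := by positivity
  linarith [le_two_zpow_jIdx_add_one hρ]

lemma setLIntegral_ofReal_mul_le {α : Type*} [MeasurableSpace α] {μ : Measure α} {s : Set α}
    (hs : MeasurableSet s) {w : α → ℝ} {c : ℝ} (hw : ∀ x ∈ s, w x ≤ c) (g : α → ℝ≥0∞) :
    ∫⁻ x in s, ENNReal.ofReal (w x) * g x ∂μ ≤ ENNReal.ofReal c * ∫⁻ x in s, g x ∂μ := by
  rw [← lintegral_const_mul' _ _ ENNReal.ofReal_ne_top]
  exact setLIntegral_mono' hs fun x hx ↦ by gcongr; exact hw x hx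

-- The bound `radialWeight R x ≤ min (1 / R) (1 / |x|)` turns growth of order `p + 1` into the
-- linear growth required on dyadic shells.
theorem hasDyadicMassLE_radialWeight_pow_mul (p : ℕ) (hρ : 0 < ρ) (hR : ρ ≤ R)
    (g : Ed d → ℝ≥0∞) :
    HasDyadicMassLE ρ (fun x ↦ ENNReal.ofReal (radialWeight R x ^ p) * g x)
      (ENNReal.ofReal (2 ^ (2 * p + 1)) * morreySup (p + 1) ρ g) := by
  have hβ (x : Ed d) := radialWeight_pos (hρ.trans_le hR) x
  constructor
  · intro j hj
    have hw (x : Ed d) (hx : x ∈ shell d j) : radialWeight R x ^ p ≤ ((2 : ℝ) ^ j)⁻¹ ^ p := by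
      have hx0 : (0 : ℝ) < 2 ^ j := by positivity
      refine pow_le_pow_left₀ (hβ x).le ((le_inv_comm₀ (hβ x) hx0).2 (hx.1.le.trans ?_)) p
      rw [← one_div, le_div_iff₀' (hβ x)]
      exact radialWeight_mul_norm_le_one R x
    refine (setLIntegral_ofReal_mul_le (measurableSet_shell d j) hw g).trans ?_
    calc _ ≤ ENNReal.ofReal (((2 : ℝ) ^ j)⁻¹ ^ p)
          * (ENNReal.ofReal ((2 * (2 : ℝ) ^ (j + 1)) ^ (p + 1)) * morreySup (p + 1) ρ g) := by
          gcongr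
          exact (lintegral_mono_set (shell_subset_ball d j)).trans
            (lintegral_ball_le_morreySup _ hρ (le_two_mul_two_zpow hρ hj) g)
      _ = _ := by
          rw [← mul_assoc, ← mul_assoc, ← ENNReal.ofReal_mul (by positivity),
            ← ENNReal.ofReal_mul (by positivity), zpow_add_one₀ two_ne_zero]
          congr 2
          rw [show 2 * ((2 : ℝ) ^ j * 2) = 2 ^ 2 * 2 ^ j by ring, mul_pow, ← pow_mul, inv_pow]
          field_simp
          ring
  · have hw (x : Ed d) : radialWeight R x ^ p ≤ ρ⁻¹ ^ p :=
      pow_le_pow_left₀ (hβ x).le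
        ((radialWeight_le_inv (hρ.trans_le hR) x).trans (inv_anti₀ hρ hR)) p
    refine (setLIntegral_ofReal_mul_le measurableSet_ball (fun x _ ↦ hw x) g).trans ?_
    calc _ ≤ ENNReal.ofReal (ρ⁻¹ ^ p) * (ENNReal.ofReal (ρ ^ (p + 1)) * morreySup (p + 1) ρ g) := by
          gcongr
          exact lintegral_ball_le_morreySup _ hρ le_rfl g
      _ = ENNReal.ofReal ρ * (1 * morreySup (p + 1) ρ g) := by
          rw [← mul_assoc, ← ENNReal.ofReal_mul (by positivity), one_mul]
          rw [pow_succ, inv_pow, inv_mul_cancel_left₀ (by positivity)]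
      _ ≤ _ := by
          gcongr
          exact ENNReal.one_le_ofReal.2 (one_le_pow₀ one_le_two)

lemma hasDyadicMassLE_morreySup_one (hρ : 0 < ρ) (g : Ed d → ℝ≥0∞) :
    HasDyadicMassLE ρ g (2 * morreySup 1 ρ g) := by
  simpa using hasDyadicMassLE_radialWeight_pow_mul 0 hρ le_rfl g

end Dyadic

section DecayWeight

variable {d : ℕ} {ρ a γ : ℝ}

/-- The majorant `a (1 + |x|)^(-γ-1)` of the short range potential and of the radial derivative
of the long range one. -/
def decayWeight (a γ : ℝ) (x : Ed d) : ℝ := a * (1 + ‖x‖) ^ (-γ - 1)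

lemma continuous_decayWeight (a γ : ℝ) : Continuous (decayWeight a γ : Ed d → ℝ) :=
  continuous_const.mul ((continuous_const.add continuous_norm).rpow_const
    fun x ↦ .inl (add_pos_of_pos_of_nonneg one_pos (norm_nonneg x)).ne')

lemma decayWeight_nonneg (ha : 0 ≤ a) (x : Ed d) : 0 ≤ decayWeight a γ x := by
  unfold decayWeight
  positivity

lemma decayWeight_le (ha : 0 ≤ a) (hγ : 0 < γ) (x : Ed d) : decayWeight a γ x ≤ a :=
  mul_le_of_le_one_right ha
    (Real.rpow_le_one_of_one_le_of_nonpos (by simp) (by linarith))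

/-- The bound `2^{j+1} (1 + 2^j)^(-γ-1)` for the decay weight on `C_j` times its thickness. -/
def dyadicWeight (γ : ℝ) (j : ℤ) : ℝ := (2 : ℝ) ^ (j + 1) * (1 + (2 : ℝ) ^ j) ^ (-γ - 1)

lemma dyadicWeight_nonneg (γ : ℝ) (j : ℤ) : 0 ≤ dyadicWeight γ j := by
  unfold dyadicWeight
  positivity

lemma dyadicWeight_natCast_le (hγ : 0 < γ) (n : ℕ) :
    dyadicWeight γ n ≤ 2 * ((2 : ℝ) ^ (-γ)) ^ n := by
  have hdecay : (1 + (2 : ℝ) ^ n) ^ (-γ - 1) ≤ ((2 : ℝ) ^ n) ^ (-γ - 1) :=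
    Real.rpow_le_rpow_of_nonpos (by positivity) (by linarith) (by linarith)
  calc dyadicWeight γ n = (2 : ℝ) ^ n * 2 * (1 + 2 ^ n) ^ (-γ - 1) := by
        rw [dyadicWeight, zpow_add_one₀ two_ne_zero, zpow_natCast]
    _ ≤ (2 : ℝ) ^ n * 2 * ((2 : ℝ) ^ n) ^ (-γ - 1) := by gcongr
    _ = 2 * ((2 : ℝ) ^ n) ^ (-γ) := by
        rw [Real.rpow_sub_one (by positivity)]
        field_simp
    _ = 2 * ((2 : ℝ) ^ (-γ)) ^ n := by rw [Real.rpow_pow_comm two_pos.le]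

lemma dyadicWeight_neg_natCast_le (hγ : 0 < γ) (n : ℕ) :
    dyadicWeight γ (-n) ≤ 2 * (1 / 2 : ℝ) ^ n := by
  have hle : (1 + ((2 : ℝ) ^ n)⁻¹) ^ (-γ - 1) ≤ 1 :=
    Real.rpow_le_one_of_one_le_of_nonpos (by simp) (by linarith)
  calc dyadicWeight γ (-n) = ((2 : ℝ) ^ n)⁻¹ * 2 * (1 + (2 ^ n)⁻¹) ^ (-γ - 1) := by
        rw [dyadicWeight, zpow_add_one₀ two_ne_zero, zpow_neg, zpow_natCast]
    _ ≤ ((2 : ℝ) ^ n)⁻¹ * 2 * 1 := by gcongr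
    _ = 2 * (1 / 2 : ℝ) ^ n := by rw [one_div, inv_pow]; ring

lemma summable_dyadicWeight (hγ : 0 < γ) : Summable (dyadicWeight γ) := by
  have hpos : Summable fun n : ℕ ↦ 2 * ((2 : ℝ) ^ (-γ)) ^ n :=
    (summable_geometric_of_lt_one (by positivity)
      (Real.rpow_lt_one_of_one_lt_of_neg one_lt_two (by linarith))).mul_left 2
  have hneg : Summable fun n : ℕ ↦ 2 * (1 / 2 : ℝ) ^ n := summable_geometric_two.mul_left 2
  exact .of_nat_of_neg
    (.of_nonneg_of_le (fun _ ↦ dyadicWeight_nonneg γ _) (dyadicWeight_natCast_le hγ) hpos)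
    (.of_nonneg_of_le (fun _ ↦ dyadicWeight_nonneg γ _) (dyadicWeight_neg_natCast_le hγ) hneg)

/-- The constant `a (ρ + ∑_j 2^{j+1} (1 + 2^j)^(-γ-1))` of the embedding of `X_ρ` into `L²`
weighted by `decayWeight a γ`. -/
def decayMass (a γ ρ : ℝ) : ℝ := a * (ρ + ∑' j, dyadicWeight γ j)

lemma decayMass_nonneg (ha : 0 ≤ a) (hρ : 0 ≤ ρ) : 0 ≤ decayMass a γ ρ :=
  mul_nonneg ha (add_nonneg hρ (tsum_nonneg (dyadicWeight_nonneg γ)))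

variable {g : Ed d → ℝ≥0∞} {K : ℝ≥0∞}

lemma setLIntegral_shell_decayWeight_mul_le (ha : 0 ≤ a) (hγ : 0 < γ)
    (h : HasDyadicMassLE ρ g K) {j : ℤ} (hj : jIdx ρ ≤ j) :
    ∫⁻ x in shell d j, ENNReal.ofReal (decayWeight a γ x) * g x
      ≤ ENNReal.ofReal (a * dyadicWeight γ j) * K := by
  have hw (x : Ed d) (hx : x ∈ shell d j) :
      decayWeight a γ x ≤ a * (1 + (2 : ℝ) ^ j) ^ (-γ - 1) := by
    unfold decayWeight
    gcongr a * ?_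
    exact Real.rpow_le_rpow_of_nonpos (by positivity) (by linarith [hx.1]) (by linarith)
  refine (setLIntegral_ofReal_mul_le (measurableSet_shell d j) hw g).trans ?_
  refine (mul_le_mul_right (h.1 j hj) _).trans_eq ?_
  rw [← mul_assoc, ← ENNReal.ofReal_mul (by positivity), dyadicWeight]
  ring_nf

theorem lintegral_decayWeight_mul_le (hρ : 0 < ρ) (ha : 0 ≤ a) (hγ : 0 < γ)
    (h : HasDyadicMassLE ρ g K) :
    ∫⁻ x, ENNReal.ofReal (decayWeight a γ x) * g x ≤ ENNReal.ofReal (decayMass a γ ρ) * K := by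
  have hsplit : ENNReal.ofReal (decayMass a γ ρ) * K
      = (∑' j, ENNReal.ofReal (a * dyadicWeight γ j) * K) + ENNReal.ofReal (a * ρ) * K := by
    rw [ENNReal.tsum_mul_right, ← ENNReal.ofReal_tsum_of_nonneg
      (fun j ↦ mul_nonneg ha (dyadicWeight_nonneg γ j)) ((summable_dyadicWeight hγ).mul_left a),
      tsum_mul_left, ← add_mul, ← ENNReal.ofReal_add
      (mul_nonneg ha (tsum_nonneg (dyadicWeight_nonneg γ))) (by positivity), decayMass]
    ring_nf
  rw [hsplit]
  refine (lintegral_le_tsum_shell_add_ball hρ _).trans ?_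
  gcongr ?_ + ?_
  · refine le_trans ?_ (ENNReal.tsum_comp_le_tsum_of_injective
      (f := (Subtype.val : {j : ℤ // jIdx ρ ≤ j} → ℤ)) Subtype.val_injective _)
    gcongr with j
    exact setLIntegral_shell_decayWeight_mul_le ha hγ h j.2
  · refine (setLIntegral_ofReal_mul_le measurableSet_ball
      (fun x _ ↦ decayWeight_le ha hγ x) g).trans ?_
    rw [ENNReal.ofReal_mul ha, mul_assoc]
    gcongr
    exact h.2

end DecayWeight

/-! ### Surface measure of the sphere -/

section CubeCharts

variable {n : ℕ} {i : Fin (n + 1)} {s : ℝ}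

/-- The point of the hyperplane `{x | x i = s}` whose other coordinates are `y`. -/
def facePoint (i : Fin (n + 1)) (s : ℝ) (y : Fin n → ℝ) : Ed (n + 1) :=
  WithLp.toLp 2 (i.insertNth s y)

/-- The radial projection of the hyperplane `{x | x i = s}` to the unit sphere. For `s = ±1` and
`|y|_∞ ≤ 1` these charts cover the sphere by the projected faces of a cube. -/
def sphereChart (i : Fin (n + 1)) (s : ℝ) (y : Fin n → ℝ) : Ed (n + 1) :=
  ‖facePoint i s y‖⁻¹ • facePoint i s y

lemma facePoint_ne_zero (hs : s ≠ 0) (y : Fin n → ℝ) : facePoint i s y ≠ 0 := fun h ↦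
  hs (by simpa [facePoint] using congr($h i))

lemma contDiff_facePoint (i : Fin (n + 1)) (s : ℝ) : ContDiff ℝ 1 (facePoint i s) := by
  refine contDiff_euclidean.2 (i.forall_iff_succAbove.2 ⟨?_, fun j ↦ ?_⟩)
  · simpa [facePoint] using contDiff_const
  · simpa [facePoint] using contDiff_apply ℝ ℝ j

lemma contDiff_sphereChart (i : Fin (n + 1)) (hs : s ≠ 0) : ContDiff ℝ 1 (sphereChart i s) :=
  have hz := facePoint_ne_zero (i := i) hs
  (((contDiff_facePoint i s).norm ℝ hz).inv fun y ↦ norm_ne_zero_iff.2 (hz y)).smul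
    (contDiff_facePoint i s)

lemma norm_smul_sphereChart (hs : s ≠ 0) (y : Fin n → ℝ) :
    ‖facePoint i s y‖ • sphereChart i s y = facePoint i s y :=
  smul_inv_smul₀ (norm_ne_zero_iff.2 (facePoint_ne_zero hs y)) _

lemma exists_hausdorffMeasure_sphereChart_le (i : Fin (n + 1)) (hs : s ≠ 0) :
    ∃ K : ℝ≥0∞, K ≠ ⊤ ∧ ∀ A ⊆ closedBall (0 : Fin n → ℝ) 1,
      μH[n] (sphereChart i s '' A) ≤ K * volume A := by
  obtain ⟨K, hK⟩ := (contDiff_sphereChart i hs).locallyLipschitz.locallyLipschitzOn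
    |>.exists_lipschitzOnWith_of_compact (isCompact_closedBall (0 : Fin n → ℝ) 1)
  refine ⟨(K : ℝ≥0∞) ^ (n : ℝ), ENNReal.rpow_ne_top_of_nonneg n.cast_nonneg ENNReal.coe_ne_top,
    fun A hA ↦ ?_⟩
  have hpi : (volume : Measure (Fin n → ℝ)) = μH[n] := by
    rw [← hausdorffMeasure_pi_real, Fintype.card_fin]
  rw [hpi]
  exact (hK.mono hA).hausdorffMeasure_image_le n.cast_nonneg

/-- The part of the cone over the set `A` in the face `{x | x i = s}`, `s = ±1`, whose height lies
in `(ρ/2, ρ)`; the coordinates are the height times `s`, and the remaining ones. -/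
def coneSlab (s ρ : ℝ) (A : Set (Fin n → ℝ)) : Set (ℝ × (Fin n → ℝ)) :=
  {p | s * p.1 ∈ Ioo (ρ / 2) ρ ∧ (s * p.1)⁻¹ • p.2 ∈ A}

lemma measurableSet_coneSlab (s ρ : ℝ) {A : Set (Fin n → ℝ)} (hA : MeasurableSet A) :
    MeasurableSet (coneSlab s ρ A) := by
  have hheight : Measurable fun p : ℝ × (Fin n → ℝ) ↦ s * p.1 := measurable_fst.const_mul s
  exact (hheight measurableSet_Ioo).inter ((hheight.inv.smul measurable_snd) hA)

lemma le_volume_coneSlab (hs : |s| = 1) {ρ : ℝ} (hρ : 0 < ρ) {A : Set (Fin n → ℝ)}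
    (hA : MeasurableSet A) :
    ENNReal.ofReal ((ρ / 2) ^ (n + 1)) * volume A ≤ volume (coneSlab s ρ A) := by
  have hs0 : s ≠ 0 := by rintro rfl; simp at hs
  have hslice (t : ℝ) (ht : s * t ∈ Ioo (ρ / 2) ρ) :
      ENNReal.ofReal ((ρ / 2) ^ n) * volume A ≤ volume (Prod.mk t ⁻¹' coneSlab s ρ A) := by
    have hpos : 0 < s * t := (half_pos hρ).trans ht.1
    have hpre : Prod.mk t ⁻¹' coneSlab s ρ A = ((s * t)⁻¹ • ·) ⁻¹' A := by
      ext y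
      simp [coneSlab, ht.1, ht.2]
    rw [hpre, Measure.addHaar_preimage_smul _ (inv_ne_zero hpos.ne'), inv_pow, inv_inv,
      Module.finrank_fin_fun, abs_of_pos (pow_pos hpos n)]
    gcongr
    exact ht.1.le
  have hlength : volume ((s * ·) ⁻¹' Ioo (ρ / 2) ρ) = ENNReal.ofReal (ρ / 2) := by
    rw [Real.volume_preimage_mul_left hs0, abs_inv, hs, Real.volume_Ioo, sub_self_div_two]
    simp
  calc ENNReal.ofReal ((ρ / 2) ^ (n + 1)) * volume A
      = ∫⁻ _ in (s * ·) ⁻¹' Ioo (ρ / 2) ρ, ENNReal.ofReal ((ρ / 2) ^ n) * volume A := by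
        rw [setLIntegral_const, hlength, pow_succ, ENNReal.ofReal_mul (by positivity)]
        ring
    _ ≤ ∫⁻ t in (s * ·) ⁻¹' Ioo (ρ / 2) ρ, volume (Prod.mk t ⁻¹' coneSlab s ρ A) :=
        setLIntegral_mono' (measurableSet_Ioo.preimage (measurable_const_mul s)) hslice
    _ ≤ volume (coneSlab s ρ A) := by
        rw [Measure.volume_eq_prod, Measure.prod_apply (measurableSet_coneSlab s ρ hA)]
        exact setLIntegral_le_lintegral _ _

open scoped Pointwise in
lemma mem_Ioo_smul_image_sphereChart (hs : |s| = 1) {ρ : ℝ} (hρ : 0 < ρ) {A : Set (Fin n → ℝ)}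
    (hA : ∀ y ∈ A, ρ * ‖facePoint i s y‖ ≤ 1) {x : Ed (n + 1)}
    (hx : (x i, i.removeNth x) ∈ coneSlab s ρ A) :
    x ∈ Ioo (0 : ℝ) 1 • (sphereChart i s '' A) := by
  obtain ⟨⟨hlow, hup⟩, hy⟩ := hx
  have hs0 : s ≠ 0 := by rintro rfl; simp at hs
  have hpos : 0 < s * x i := (half_pos hρ).trans hlow
  set y := (s * x i)⁻¹ • i.removeNth x with hy_def
  have hz : 0 < ‖facePoint i s y‖ := norm_pos_iff.2 (facePoint_ne_zero hs0 y)
  have hss : s * s = 1 := by rw [← abs_mul_abs_self, hs, one_mul]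
  have hxz : x = (s * x i) • facePoint i s y := by
    ext j
    induction j using i.succAboveCases with
    | x => simp [facePoint, mul_right_comm s, hss]
    | p j =>
      simpa [facePoint, hy_def, Fin.removeNth, -mul_inv_rev] using
        (mul_inv_cancel_left₀ hpos.ne' _).symm
  refine Set.mem_smul.2 ⟨s * x i * ‖facePoint i s y‖, ⟨mul_pos hpos hz, ?_⟩, _,
    mem_image_of_mem _ hy, ?_⟩
  · exact (mul_lt_mul_of_pos_right hup hz).trans_le (hA y hy)
  · rw [mul_smul, norm_smul_sphereChart hs0, ← hxz]

open scoped Pointwise in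
lemma exists_volume_le_mul_volume_smul_sphereChart (i : Fin (n + 1)) (hs : |s| = 1) :
    ∃ c : ℝ≥0∞, c ≠ ⊤ ∧ ∀ A ⊆ closedBall (0 : Fin n → ℝ) 1, MeasurableSet A →
      volume A ≤ c * volume (Ioo (0 : ℝ) 1 • (sphereChart i s '' A)) := by
  obtain ⟨M, hM⟩ := (isCompact_closedBall (0 : Fin n → ℝ) 1).exists_bound_of_continuousOn
    (contDiff_facePoint i s).continuous.continuousOn
  have hM0 : 0 < M := (norm_pos_iff.2 (facePoint_ne_zero (by rintro rfl; simp at hs) 0)).trans_le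
    (hM 0 (mem_closedBall_self zero_le_one))
  have hc : 0 < (M⁻¹ / 2) ^ (n + 1) := by positivity
  refine ⟨(ENNReal.ofReal ((M⁻¹ / 2) ^ (n + 1)))⁻¹, by simpa using hc, fun A hA hAm ↦ ?_⟩
  have hcoord : MeasurePreserving fun x : Ed (n + 1) ↦ (x i, i.removeNth x) :=
    (volume_preserving_piFinSuccAbove (fun _ ↦ ℝ) i).comp (PiLp.volume_preserving_ofLp _)
  rw [← ENNReal.div_eq_inv_mul, ENNReal.le_div_iff_mul_le (by simp [hc]) (by simp), mul_comm]
  refine (le_volume_coneSlab hs (inv_pos.2 hM0) hAm).trans ?_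
  rw [← hcoord.measure_preimage (measurableSet_coneSlab s _ hAm).nullMeasurableSet]
  refine measure_mono fun x hx ↦ mem_Ioo_smul_image_sphereChart hs (inv_pos.2 hM0)
    (fun y hy ↦ ?_) hx
  rw [inv_mul_le_one₀ hM0]
  exact hM y (hA hy)

lemma exists_sphereChart_eq {x : Ed (n + 1)} (hx : ‖x‖ = 1) :
    ∃ i : Fin (n + 1), ∃ s : SignType, |(s : ℝ)| = 1 ∧
      ∃ y ∈ closedBall (0 : Fin n → ℝ) 1, sphereChart i s y = x := by
  obtain ⟨i, -, hi⟩ := Finset.exists_max_image Finset.univ (fun i ↦ |x i|) Finset.univ_nonempty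
  have hxi : 0 < |x i| := by
    by_contra! h
    have hx0 : x = 0 := by
      ext j
      exact abs_nonpos_iff.1 ((hi j (Finset.mem_univ j)).trans h)
    simp [hx0] at hx
  have hface : facePoint i (SignType.sign (x i)) (|x i|⁻¹ • i.removeNth x) = |x i|⁻¹ • x := by
    ext j
    induction j using i.succAboveCases with
    | x => simp [facePoint, eq_inv_mul_iff_mul_eq₀ hxi.ne']
    | p j => simp [facePoint, Fin.removeNth]
  refine ⟨i, SignType.sign (x i), ?_, |x i|⁻¹ • i.removeNth x, ?_, ?_⟩
  · rcases (abs_pos.1 hxi).lt_or_gt with h | h <;> simp [h]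
  · rw [mem_closedBall_zero_iff, pi_norm_le_iff_of_nonneg zero_le_one]
    intro j
    simpa [Fin.removeNth, abs_mul, inv_mul_le_one₀ hxi] using hi _ (Finset.mem_univ (i.succAbove j))
  · rw [sphereChart, hface, norm_smul, hx, smul_smul]
    simp [hxi.ne']

open scoped Pointwise in
lemma exists_hausdorffMeasure_image_preimage_le (i : Fin (n + 1)) (hs : |s| = 1) :
    ∃ C : ℝ≥0∞, C ≠ ⊤ ∧ ∀ E : Set (Ed (n + 1)), MeasurableSet E →
      μH[n] (sphereChart i s '' (closedBall 0 1 ∩ sphereChart i s ⁻¹' E))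
        ≤ C * volume (Ioo (0 : ℝ) 1 • E) := by
  have hs0 : s ≠ 0 := by rintro rfl; simp at hs
  obtain ⟨K, hK, hKle⟩ := exists_hausdorffMeasure_sphereChart_le i hs0
  obtain ⟨c, hc, hcle⟩ := exists_volume_le_mul_volume_smul_sphereChart i hs
  refine ⟨K * c, ENNReal.mul_ne_top hK hc, fun E hE ↦ ?_⟩
  have hm : MeasurableSet (closedBall 0 1 ∩ sphereChart i s ⁻¹' E) :=
    measurableSet_closedBall.inter ((contDiff_sphereChart i hs0).continuous.measurable hE)
  have hsub : sphereChart i s '' (closedBall 0 1 ∩ sphereChart i s ⁻¹' E) ⊆ E :=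
    (image_mono inter_subset_right).trans (image_preimage_subset _ _)
  refine (hKle _ inter_subset_left).trans ?_
  rw [mul_assoc]
  gcongr
  refine (hcle _ inter_subset_left hm).trans ?_
  gcongr

theorem exists_hausdorffMeasure_sphere_le_toSphere (n : ℕ) :
    ∃ C : ℝ≥0∞, C ≠ ⊤ ∧ (μH[n] : Measure (sphere (0 : Ed (n + 1)) 1))
      ≤ C • (volume : Measure (Ed (n + 1))).toSphere := by
  classical
  choose C hC hCle using fun p : Fin (n + 1) × {s : SignType // |(s : ℝ)| = 1} ↦
    exists_hausdorffMeasure_image_preimage_le p.1 p.2.2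
  refine ⟨∑ p, C p, (ENNReal.sum_lt_top.2 fun p _ ↦ (hC p).lt_top).ne,
    Measure.le_iff.2 fun E hE ↦ ?_⟩
  have hE' : MeasurableSet (Subtype.val '' E : Set (Ed (n + 1))) :=
    (MeasurableEmbedding.subtype_coe isClosed_sphere.measurableSet).measurableSet_image.2 hE
  have hcover : (Subtype.val '' E : Set (Ed (n + 1))) ⊆ ⋃ p : Fin (n + 1) × {s : SignType //
      |(s : ℝ)| = 1}, sphereChart p.1 p.2.1 '' (closedBall 0 1 ∩ sphereChart p.1 p.2.1 ⁻¹'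
        (Subtype.val '' E)) := by
    intro x hx
    obtain ⟨i, s, hs, y, hy, rfl⟩ := exists_sphereChart_eq
      (x := x) (by obtain ⟨θ, -, rfl⟩ := hx; simp)
    exact mem_iUnion.2 ⟨(i, ⟨s, hs⟩), y, ⟨hy, hx⟩, rfl⟩
  calc μH[n] E = μH[n] (Subtype.val '' E) :=
        (isometry_subtype_coe.hausdorffMeasure_image (.inl n.cast_nonneg) E).symm
    _ ≤ _ := (measure_mono hcover).trans (measure_iUnion_fintype_le _ _)
    _ ≤ ∑ p, C p * (volume : Measure (Ed (n + 1))).toSphere E := by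
        gcongr with p
        refine (hCle p _ hE').trans ?_
        gcongr
        rw [Measure.toSphere_apply' _ hE]
        exact le_mul_of_one_le_left' (by simp)
    _ = _ := by rw [← Finset.sum_mul, Measure.smul_apply, smul_eq_mul]

end CubeCharts

/-! ### The trace inequality on spheres -/

section Polar

variable {E : Type*} [NormedAddCommGroup E] [NormedSpace ℝ E] [MeasurableSpace E] [BorelSpace E]

lemma lintegral_eq_lintegral_toSphere [FiniteDimensional ℝ E] [Nontrivial E] (μ : Measure E)
    [μ.IsAddHaarMeasure] {φ : E → ℝ≥0∞} (hφ : Measurable φ) :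
    ∫⁻ x, φ x ∂μ = ∫⁻ θ : sphere (0 : E) 1, (∫⁻ r in Ioi (0 : ℝ),
      ENNReal.ofReal (r ^ (Module.finrank ℝ E - 1)) * φ (r • (θ : E))) ∂μ.toSphere := by
  have hpolar := μ.measurePreserving_homeomorphUnitSphereProd.lintegral_comp_emb
    (Homeomorph.measurableEmbedding _) (fun p ↦ φ ((homeomorphUnitSphereProd E).symm p : E))
  simp only [Homeomorph.symm_apply_apply] at hpolar
  have hφ' : Measurable fun p ↦ φ ((homeomorphUnitSphereProd E).symm p : E) :=
    hφ.comp (measurable_subtype_coe.comp (homeomorphUnitSphereProd E).symm.measurable)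
  calc ∫⁻ x, φ x ∂μ = ∫⁻ x : ({0}ᶜ : Set E), φ x ∂(μ.comap Subtype.val) := by
        rw [lintegral_subtype_comap (measurableSet_singleton _).compl, restrict_compl_singleton]
    _ = _ := hpolar.trans (lintegral_prod _ hφ'.aemeasurable)
    _ = _ := lintegral_congr fun θ ↦ by
        have hray : Measurable fun r : Ioi (0 : ℝ) ↦ φ ((r : ℝ) • (θ : E)) :=
          hφ.comp (by fun_prop)
        rw [Measure.volumeIoiPow]
        simp only [homeomorphUnitSphereProd_symm_apply_coe]
        rw [lintegral_withDensity_eq_lintegral_mul _ (by fun_prop) hray]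
        exact lintegral_subtype_comap measurableSet_Ioi
          fun r : ℝ ↦ ENNReal.ofReal (r ^ (Module.finrank ℝ E - 1)) * φ (r • (θ : E))

lemma setLIntegral_ball_eq_lintegral_toSphere [FiniteDimensional ℝ E] [Nontrivial E]
    (μ : Measure E) [μ.IsAddHaarMeasure] (R : ℝ) {φ : E → ℝ≥0∞} (hφ : Measurable φ) :
    ∫⁻ x in ball (0 : E) R, φ x ∂μ = ∫⁻ θ : sphere (0 : E) 1, (∫⁻ r in Ioo (0 : ℝ) R,
      ENNReal.ofReal (r ^ (Module.finrank ℝ E - 1)) * φ (r • (θ : E))) ∂μ.toSphere := by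
  rw [← lintegral_indicator measurableSet_ball,
    lintegral_eq_lintegral_toSphere μ (hφ.indicator measurableSet_ball)]
  refine lintegral_congr fun θ ↦ ?_
  rw [← Ioi_inter_Iio, inter_comm, ← Measure.restrict_restrict measurableSet_Iio,
    ← lintegral_indicator measurableSet_Iio]
  refine setLIntegral_congr_fun measurableSet_Ioi fun r (hr : 0 < r) ↦ ?_
  by_cases h : r < R <;> simp [indicator, h, norm_smul, abs_of_pos hr]

lemma restrict_sphere_hausdorffMeasure_le (n : ℕ) {R : ℝ} (hR : 0 < R) :
    (μH[n] : Measure E).restrict (sphere 0 R)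
      ≤ ENNReal.ofReal (R ^ n) •
        (μH[n] : Measure (sphere (0 : E) 1)).map (fun θ : sphere (0 : E) 1 ↦ R • (θ : E)) := by
  have hdil : LipschitzWith R.toNNReal fun θ : sphere (0 : E) 1 ↦ R • (θ : E) :=
    .of_dist_le_mul fun θ θ' ↦ by
      rw [dist_smul₀, Real.norm_of_nonneg hR.le, Real.coe_toNNReal _ hR.le, Subtype.dist_eq]
  refine Measure.le_iff.2 fun A hA ↦ ?_
  rw [Measure.restrict_apply hA, Measure.smul_apply,
    Measure.map_apply hdil.continuous.measurable hA, smul_eq_mul]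
  have hsub : A ∩ sphere (0 : E) R
      ⊆ (fun θ : sphere (0 : E) 1 ↦ R • (θ : E)) ''
        ((fun θ : sphere (0 : E) 1 ↦ R • (θ : E)) ⁻¹' A) := by
    rintro x ⟨hxA, hxR⟩
    have hx : R • (R⁻¹ • x) = x := smul_inv_smul₀ hR.ne' x
    refine ⟨⟨R⁻¹ • x, ?_⟩, by rwa [mem_preimage, hx], hx⟩
    rw [mem_sphere_zero_iff_norm] at hxR ⊢
    rw [norm_smul, hxR, norm_inv, Real.norm_of_nonneg hR.le, inv_mul_cancel₀ hR.ne']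
  refine (measure_mono hsub).trans ((hdil.hausdorffMeasure_image_le n.cast_nonneg _).trans_eq ?_)
  rw [ENNReal.rpow_natCast, ENNReal.ofReal_pow hR.le]
  rfl

end Polar

section RadialTrace

variable {n : ℕ} {u : Ed (n + 1) → ℂ} {θ : Ed (n + 1)} {R : ℝ}

lemma hasDerivAt_pow_mul_norm_sq_smul (hu : ContDiff ℝ 1 u) (θ : Ed (n + 1)) (r : ℝ) :
    HasDerivAt (fun r : ℝ ↦ r ^ (n + 1) * ‖u (r • θ)‖ ^ 2)
      ((n + 1) * r ^ n * ‖u (r • θ)‖ ^ 2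
        + r ^ (n + 1) * (2 * ⟪u (r • θ), fderiv ℝ u (r • θ) θ⟫)) r := by
  have hray : HasDerivAt (fun r : ℝ ↦ r • θ) θ r := by simpa using (hasDerivAt_id r).smul_const θ
  have hpow : HasDerivAt (fun r : ℝ ↦ r ^ (n + 1)) ((n + 1) * r ^ n) r := by
    simpa using hasDerivAt_pow (n + 1) r
  exact hpow.mul ((hu.differentiable one_ne_zero _).hasFDerivAt.comp_hasDerivAt r hray).norm_sq

lemma deriv_pow_mul_norm_sq_smul_le (u : Ed (n + 1) → ℂ) (hθ : ‖θ‖ = 1) {r : ℝ} (hr : 0 ≤ r)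
    (hrR : r ≤ R) :
    (n + 1) * r ^ n * ‖u (r • θ)‖ ^ 2 + r ^ (n + 1) * (2 * ⟪u (r • θ), fderiv ℝ u (r • θ) θ⟫)
      ≤ r ^ n * ((n + 2) * ‖u (r • θ)‖ ^ 2 + R ^ 2 * gradNorm u (r • θ) ^ 2) := by
  have hinner : ⟪u (r • θ), fderiv ℝ u (r • θ) θ⟫ ≤ ‖u (r • θ)‖ * gradNorm u (r • θ) := by
    refine (real_inner_le_norm _ _).trans (mul_le_mul_of_nonneg_left ?_ (norm_nonneg _))
    simpa [hθ] using norm_fderiv_apply_le u (r • θ) θ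
  have hcross : r * (2 * ⟪u (r • θ), fderiv ℝ u (r • θ) θ⟫)
      ≤ ‖u (r • θ)‖ ^ 2 + R ^ 2 * gradNorm u (r • θ) ^ 2 := by
    calc r * (2 * ⟪u (r • θ), fderiv ℝ u (r • θ) θ⟫)
        ≤ r * (2 * (‖u (r • θ)‖ * gradNorm u (r • θ))) := by gcongr
      _ ≤ ‖u (r • θ)‖ ^ 2 + r ^ 2 * gradNorm u (r • θ) ^ 2 := by
          linarith [sq_nonneg (‖u (r • θ)‖ - r * gradNorm u (r • θ))]
      _ ≤ _ := by gcongr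
  linear_combination r ^ n * hcross

lemma ofReal_pow_mul_norm_sq_smul_le (hu : ContDiff ℝ 1 u) (hR : 0 < R) (hθ : ‖θ‖ = 1) :
    ENNReal.ofReal (R ^ (n + 1) * ‖u (R • θ)‖ ^ 2) ≤ ∫⁻ r in Ioo (0 : ℝ) R,
      ENNReal.ofReal (r ^ n) *
        ENNReal.ofReal ((n + 2) * ‖u (r • θ)‖ ^ 2 + R ^ 2 * gradNorm u (r • θ) ^ 2) := by
  have hcu := hu.continuous
  have hcg := continuous_gradNorm hu
  have hcont : Continuous fun r : ℝ ↦
      r ^ n * ((n + 2) * ‖u (r • θ)‖ ^ 2 + R ^ 2 * gradNorm u (r • θ) ^ 2) := by fun_prop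
  have hcont' : Continuous fun r : ℝ ↦ (n + 1) * r ^ n * ‖u (r • θ)‖ ^ 2
      + r ^ (n + 1) * (2 * ⟪u (r • θ), fderiv ℝ u (r • θ) θ⟫) := by fun_prop
  have hftc := intervalIntegral.integral_eq_sub_of_hasDerivAt (a := 0) (b := R)
    (fun r _ ↦ hasDerivAt_pow_mul_norm_sq_smul hu θ r) (hcont'.intervalIntegrable _ _)
  rw [zero_pow n.succ_ne_zero, zero_mul, sub_zero] at hftc
  rw [← hftc]
  have hmono := intervalIntegral.integral_mono_on hR.le (hcont'.intervalIntegrable _ _)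
    (hcont.intervalIntegrable (μ := volume) 0 R)
    fun r hr ↦ deriv_pow_mul_norm_sq_smul_le u hθ hr.1 hr.2
  refine (ENNReal.ofReal_le_ofReal hmono).trans_eq ?_
  rw [intervalIntegral.integral_of_le hR.le, ← restrict_Ioo_eq_restrict_Ioc,
    ofReal_integral_eq_lintegral_ofReal
      (hcont.integrableOn_Icc.mono_set Ioo_subset_Icc_self)]
  · exact setLIntegral_congr_fun measurableSet_Ioo fun r hr ↦
      ENNReal.ofReal_mul (pow_nonneg hr.1.le n)
  · refine (ae_restrict_iff' measurableSet_Ioo).2 (.of_forall fun r hr ↦ ?_)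
    have := hr.1
    positivity

end RadialTrace

theorem exists_sphInt_le {d : ℕ} (hd : 1 ≤ d) :
    ∃ C : ℝ≥0∞, C ≠ ⊤ ∧ ∀ u : Ed d → ℂ, ContDiff ℝ 1 u → ∀ R > 0,
      ENNReal.ofReal R * sphInt R (usq u) ≤ C * ∫⁻ x in ball (0 : Ed d) R,
        ENNReal.ofReal ((d + 1) * ‖u x‖ ^ 2 + R ^ 2 * gradNorm u x ^ 2) := by
  obtain ⟨n, rfl⟩ := Nat.exists_eq_add_of_le' hd
  obtain ⟨C, hC, hle⟩ := exists_hausdorffMeasure_sphere_le_toSphere n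
  refine ⟨C, hC, fun u hu R hR ↦ ?_⟩
  have hcu := hu.continuous
  have hcg := continuous_gradNorm hu
  have hum : Measurable (usq u) := by
    rw [funext (usq_eq_ofReal u)]
    fun_prop
  have hdil : Measurable fun θ : sphere (0 : Ed (n + 1)) 1 ↦ R • (θ : Ed (n + 1)) := by fun_prop
  calc ENNReal.ofReal R * sphInt R (usq u)
      ≤ ENNReal.ofReal R * (ENNReal.ofReal (R ^ n) *
          (C * ∫⁻ θ : sphere (0 : Ed (n + 1)) 1, usq u (R • (θ : Ed (n + 1)))
            ∂(volume : Measure (Ed (n + 1))).toSphere)) := by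
        gcongr
        rw [sphInt, Nat.cast_add_one, add_sub_cancel_right]
        refine (lintegral_mono' (restrict_sphere_hausdorffMeasure_le n hR) le_rfl).trans ?_
        rw [lintegral_smul_measure, lintegral_map hum hdil, smul_eq_mul]
        gcongr
        exact (lintegral_mono' hle le_rfl).trans_eq (lintegral_smul_measure _ _)
    _ = C * ∫⁻ θ : sphere (0 : Ed (n + 1)) 1,
          ENNReal.ofReal (R ^ (n + 1) * ‖u (R • (θ : Ed (n + 1)))‖ ^ 2)
            ∂(volume : Measure (Ed (n + 1))).toSphere := by
        simp_rw [usq_eq_ofReal, ENNReal.ofReal_mul (pow_nonneg hR.le (n + 1))]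
        rw [lintegral_const_mul _ (by fun_prop), pow_succ, ENNReal.ofReal_mul (by positivity)]
        ring
    _ ≤ _ := by
        rw [setLIntegral_ball_eq_lintegral_toSphere volume R (by fun_prop),
          finrank_euclideanSpace_fin, Nat.add_sub_cancel, Nat.cast_add_one, add_assoc,
          one_add_one_eq_two]
        gcongr with θ
        exact ofReal_pow_mul_norm_sq_smul_le hu hR (norm_eq_of_mem_sphere θ)

/-! ### Norms controlled by the Morawetz form -/

section MorawetzForm

variable {d : ℕ} {ρ R κ T : ℝ} {Z : Ed d → ℝ} {u : Ed d → ℂ} {x : Ed d}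

lemma one_third_le_pow_three {y : ℝ} (hy : 0 ≤ y) (h : 1 / 2 ≤ y ^ 2) : 1 / 3 ≤ y ^ 3 := by
  have hy' : 7 / 10 ≤ y := le_of_sq_le_sq (by norm_num at h ⊢; linarith) hy
  calc (1 : ℝ) / 3 ≤ 7 / 10 * (1 / 2) := by norm_num
    _ ≤ y * y ^ 2 := by gcongr
    _ = y ^ 3 := by ring

lemma one_sixth_le_pow_five {y : ℝ} (hy : 0 ≤ y) (h : 1 / 2 ≤ y ^ 2) : 1 / 6 ≤ y ^ 5 := by
  calc (1 : ℝ) / 6 = 1 / 3 * (1 / 2) := by norm_num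
    _ ≤ y ^ 3 * y ^ 2 := by
        gcongr
        exact one_third_le_pow_three hy h
    _ = y ^ 5 := by ring

lemma half_le_radialWeight_mul_sq (hR : 0 < R) {r : ℝ} (hRr : R ≤ r) (hxr : ‖x‖ ≤ r) :
    1 / 2 ≤ (radialWeight R x * r) ^ 2 := by
  have h : radialWeight R x ^ 2 * (R ^ 2 + ‖x‖ ^ 2) ≤ radialWeight R x ^ 2 * (r ^ 2 + r ^ 2) := by
    gcongr
  rw [radialWeight_sq_mul hR] at h
  linarith

lemma one_le_virialConst (hd : 3 ≤ d) : 1 ≤ virialConst d := by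
  have : (3 : ℝ) ≤ d := mod_cast hd
  unfold virialConst
  linarith

lemma kinetic_le_morawetzForm (hd : 3 ≤ d) (hR : 0 < R) :
    1 / 2 * R ^ 2 * radialWeight R x ^ 3 * (gradNorm u x ^ 2 - Z x * ‖u x‖ ^ 2)
      ≤ morawetzForm R Z u x := by
  have hβ := radialWeight_pos hR x
  have hv := one_le_virialConst hd
  have hd' : (0 : ℝ) ≤ d - 3 := sub_nonneg.2 (mod_cast hd)
  exact le_add_of_nonneg_right (by positivity)

lemma virial_le_morawetzForm (hR : 0 < R) (hZ : Z x ≤ 0) :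
    virialConst d / 2 * (d * R ^ 2 + (d - 3) * ‖x‖ ^ 2) * radialWeight R x ^ 5 * ‖u x‖ ^ 2
      ≤ morawetzForm R Z u x := by
  have hβ := radialWeight_pos hR x
  have hpot : 0 ≤ gradNorm u x ^ 2 - Z x * ‖u x‖ ^ 2 := by
    linarith [sq_nonneg (gradNorm u x), mul_nonneg_of_nonpos_of_nonpos hZ
      (neg_nonpos.2 (sq_nonneg ‖u x‖))]
  exact le_add_of_nonneg_left (by positivity)

lemma morawetzForm_nonneg (hd : 3 ≤ d) (hR : 0 < R) (hZ : Z x ≤ 0) : 0 ≤ morawetzForm R Z u x := by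
  have hβ := radialWeight_pos hR x
  have hv := one_le_virialConst hd
  have hd' : (0 : ℝ) ≤ d - 3 := sub_nonneg.2 (mod_cast hd)
  exact le_trans (by positivity) (virial_le_morawetzForm hR hZ)

lemma gradNorm_sq_add_le_mul_morawetzForm (hd : 3 ≤ d) (hR : 0 < R) (hx : ‖x‖ ≤ R) (hκ : 0 ≤ κ)
    (hZ : κ ≤ -Z x) :
    gradNorm u x ^ 2 + κ * ‖u x‖ ^ 2 ≤ 6 * R * morawetzForm R Z u x := by
  have hβ := radialWeight_pos hR x
  have hpow := one_third_le_pow_three (by positivity) (half_le_radialWeight_mul_sq hR le_rfl hx)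
  calc gradNorm u x ^ 2 + κ * ‖u x‖ ^ 2
      = 3 * (1 / 3) * (gradNorm u x ^ 2 + κ * ‖u x‖ ^ 2) := by ring
    _ ≤ 3 * (radialWeight R x * R) ^ 3 * (gradNorm u x ^ 2 + -Z x * ‖u x‖ ^ 2) := by gcongr
    _ = 6 * R * (1 / 2 * R ^ 2 * radialWeight R x ^ 3
          * (gradNorm u x ^ 2 - Z x * ‖u x‖ ^ 2)) := by ring
    _ ≤ _ := by
        gcongr
        exact kinetic_le_morawetzForm hd hR

lemma norm_sq_le_mul_morawetzForm (hd : 3 ≤ d) (hR : 0 < R) (hx : ‖x‖ ≤ R) (hZ : Z x ≤ 0) :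
    ‖u x‖ ^ 2 ≤ 4 * R ^ 3 * morawetzForm R Z u x := by
  have hβ := radialWeight_pos hR x
  have hv := one_le_virialConst hd
  have hd' : (3 : ℝ) ≤ d := mod_cast hd
  have hpow := one_sixth_le_pow_five (by positivity) (half_le_radialWeight_mul_sq hR le_rfl hx)
  calc ‖u x‖ ^ 2 = 2 * 1 * 3 * (1 / 6) * ‖u x‖ ^ 2 := by ring
    _ ≤ 2 * virialConst d * d * (radialWeight R x * R) ^ 5 * ‖u x‖ ^ 2 := by gcongr
    _ = 4 * R ^ 3 * (virialConst d / 2 * (d * R ^ 2) * radialWeight R x ^ 5 * ‖u x‖ ^ 2) := by ring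
    _ ≤ 4 * R ^ 3 * (virialConst d / 2 * (d * R ^ 2 + (d - 3) * ‖x‖ ^ 2)
          * radialWeight R x ^ 5 * ‖u x‖ ^ 2) := by
        gcongr
        nlinarith [sq_nonneg ‖x‖]
    _ ≤ _ := by
        gcongr
        exact virial_le_morawetzForm hR hZ

lemma norm_sq_div_le_morawetzForm (hd : 3 ≤ d) (hR : 0 < R) (hx : R ≤ ‖x‖) (hZ : Z x ≤ 0) :
    (d - 3) * ‖u x‖ ^ 2 / ‖x‖ ^ 3 ≤ 12 * morawetzForm R Z u x := by
  have hβ := radialWeight_pos hR x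
  have hx0 := hR.trans_le hx
  have hv := one_le_virialConst hd
  have hd' : (0 : ℝ) ≤ d - 3 := sub_nonneg.2 (mod_cast hd)
  have hpow := one_sixth_le_pow_five (by positivity) (half_le_radialWeight_mul_sq hR hx le_rfl)
  rw [div_le_iff₀ (by positivity)]
  calc (d - 3) * ‖u x‖ ^ 2 = 6 * 1 * (1 / 6) * ((d - 3) * ‖u x‖ ^ 2) := by ring
    _ ≤ 6 * virialConst d * (radialWeight R x * ‖x‖) ^ 5 * ((d - 3) * ‖u x‖ ^ 2) := by gcongr
    _ = 12 * (virialConst d / 2 * ((d - 3) * ‖x‖ ^ 2) * radialWeight R x ^ 5 * ‖u x‖ ^ 2)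
          * ‖x‖ ^ 3 := by ring
    _ ≤ 12 * (virialConst d / 2 * (d * R ^ 2 + (d - 3) * ‖x‖ ^ 2) * radialWeight R x ^ 5
          * ‖u x‖ ^ 2) * ‖x‖ ^ 3 := by
        gcongr
        linarith [show 0 ≤ d * R ^ 2 by positivity]
    _ ≤ _ := by
        gcongr
        exact virial_le_morawetzForm hR hZ

/-- The Morawetz form of `u` is integrable with integral at most `T` at every scale `R ≥ ρ`. All
the norms of the resolvent estimate are read off from such a bound. -/
def IsMorawetzBound (ρ : ℝ) (Z : Ed d → ℝ) (u : Ed d → ℂ) (T : ℝ) : Prop :=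
  ∀ R, ρ ≤ R → Integrable (morawetzForm R Z u) ∧ ∫ x, morawetzForm R Z u x ≤ T

lemma setLIntegral_ofReal_le_of_le_mul {α : Type*} [MeasurableSpace α] {μ : Measure α}
    {W φ : α → ℝ} {s : Set α} {k : ℝ} (hs : MeasurableSet s) (hk : 0 ≤ k) (hW : Integrable W μ)
    (hW0 : ∀ x, 0 ≤ W x) (hT : ∫ x, W x ∂μ ≤ T) (h : ∀ x ∈ s, φ x ≤ k * W x) :
    ∫⁻ x in s, ENNReal.ofReal (φ x) ∂μ ≤ ENNReal.ofReal (k * T) := by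
  calc ∫⁻ x in s, ENNReal.ofReal (φ x) ∂μ ≤ ∫⁻ x in s, ENNReal.ofReal (k * W x) ∂μ :=
        setLIntegral_mono' hs fun x hx ↦ ENNReal.ofReal_le_ofReal (h x hx)
    _ ≤ ∫⁻ x, ENNReal.ofReal (k * W x) ∂μ := setLIntegral_le_lintegral _ _
    _ = ENNReal.ofReal (∫ x, k * W x ∂μ) :=
        (ofReal_integral_eq_lintegral_ofReal (hW.const_mul k)
          (.of_forall fun x ↦ mul_nonneg hk (hW0 x))).symm
    _ ≤ ENNReal.ofReal (k * T) := by
        rw [integral_const_mul]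
        gcongr

namespace IsMorawetzBound

lemma morreySup_le (h : IsMorawetzBound ρ Z u T) (hd : 3 ≤ d) (hρ : 0 < ρ) (hZ : ∀ x, Z x ≤ 0)
    {φ : Ed d → ℝ} {k : ℝ} {p : ℕ} (hk : 0 ≤ k)
    (hφ : ∀ R > 0, ∀ x, ‖x‖ ≤ R → φ x ≤ k * R ^ p * morawetzForm R Z u x) :
    morreySup p ρ (fun x ↦ ENNReal.ofReal (φ x)) ≤ ENNReal.ofReal (k * T) := by
  refine _root_.morreySup_le fun R hR ↦ ?_
  have hR0 := hρ.trans_le hR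
  rw [← ENNReal.ofReal_mul (by positivity), ← mul_assoc, mul_comm _ k]
  exact setLIntegral_ofReal_le_of_le_mul measurableSet_ball (by positivity) (h R hR).1
    (fun x ↦ morawetzForm_nonneg hd hR0 (hZ x)) (h R hR).2
    fun x hx ↦ hφ R hR0 x (mem_ball_zero_iff.1 hx).le

lemma morreySup_gradSq_le (h : IsMorawetzBound ρ Z u T) (hd : 3 ≤ d) (hρ : 0 < ρ)
    (hZ : ∀ x, Z x ≤ 0) : morreySup 1 ρ (gradSq u) ≤ ENNReal.ofReal (6 * T) := by
  simp_rw [funext (gradSq_eq_ofReal u)]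
  refine h.morreySup_le hd hρ hZ (by norm_num) fun R hR x hx ↦ ?_
  simpa using gradNorm_sq_add_le_mul_morawetzForm hd hR hx le_rfl (neg_nonneg.2 (hZ x))

lemma ofReal_mul_morreySup_usq_le (h : IsMorawetzBound ρ Z u T) (hd : 3 ≤ d) (hρ : 0 < ρ)
    (hκ : 0 < κ) (hZ : ∀ x, κ ≤ -Z x) :
    ENNReal.ofReal κ * morreySup 1 ρ (usq u) ≤ ENNReal.ofReal (6 * T) := by
  have hle : morreySup 1 ρ (usq u) ≤ ENNReal.ofReal (6 / κ * T) := by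
    simp_rw [funext (usq_eq_ofReal u)]
    refine h.morreySup_le hd hρ (fun x ↦ by linarith [hZ x]) (by positivity) fun R hR x hx ↦ ?_
    have hform := gradNorm_sq_add_le_mul_morawetzForm (u := u) hd hR hx hκ.le (hZ x)
    rw [pow_one, div_mul_eq_mul_div, div_mul_eq_mul_div, le_div_iff₀ hκ]
    linarith [sq_nonneg (gradNorm u x)]
  refine (mul_le_mul_right hle _).trans_eq ?_
  rw [← ENNReal.ofReal_mul hκ.le]
  congr 1
  field_simp

lemma morreySup_three_usq_le (h : IsMorawetzBound ρ Z u T) (hd : 3 ≤ d) (hρ : 0 < ρ)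
    (hZ : ∀ x, Z x ≤ 0) : morreySup 3 ρ (usq u) ≤ ENNReal.ofReal (4 * T) := by
  simp_rw [funext (usq_eq_ofReal u)]
  exact h.morreySup_le hd hρ hZ (by norm_num)
    fun R hR x hx ↦ norm_sq_le_mul_morawetzForm hd hR hx (hZ x)

lemma lintegral_usq_div_le (h : IsMorawetzBound ρ Z u T) (hd : 3 ≤ d) (hρ : 0 < ρ)
    (hZ : ∀ x, Z x ≤ 0) :
    ENNReal.ofReal (d - 3) * (∫⁻ x in {x : Ed d | ρ < ‖x‖}, usq u x / ENNReal.ofReal (‖x‖ ^ 3))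
      ≤ ENNReal.ofReal (12 * T) := by
  have hmeas : MeasurableSet {x : Ed d | ρ < ‖x‖} :=
    measurableSet_lt measurable_const measurable_norm
  have hd' : (0 : ℝ) ≤ d - 3 := sub_nonneg.2 (mod_cast hd)
  calc _ = ∫⁻ x in {x : Ed d | ρ < ‖x‖}, ENNReal.ofReal ((d - 3) * ‖u x‖ ^ 2 / ‖x‖ ^ 3) := by
        rw [← lintegral_const_mul' _ _ ENNReal.ofReal_ne_top]
        refine setLIntegral_congr_fun hmeas fun x hx ↦ ?_
        have hx0 : 0 < ‖x‖ := hρ.trans hx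
        rw [usq_eq_ofReal, ← ENNReal.ofReal_div_of_pos (by positivity), ← ENNReal.ofReal_mul hd',
          mul_div_assoc]
    _ ≤ _ := setLIntegral_ofReal_le_of_le_mul hmeas (by norm_num) (h ρ le_rfl).1
        (fun x ↦ morawetzForm_nonneg hd hρ (hZ x)) (h ρ le_rfl).2
        fun x hx ↦ norm_sq_div_le_morawetzForm hd hρ hx.le (hZ x)

lemma nonneg (h : IsMorawetzBound ρ Z u T) (hd : 3 ≤ d) (hρ : 0 < ρ) (hZ : ∀ x, Z x ≤ 0) : 0 ≤ T :=
  (integral_nonneg fun x ↦ morawetzForm_nonneg hd hρ (hZ x)).trans (h ρ le_rfl).2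

end IsMorawetzBound

end MorawetzForm

/-! ### Pairing a perturbed source with a function of controlled growth -/

section Pairing

variable {d : ℕ} {ρ a γ s A Kn Kφ : ℝ} {H n φ : Ed d → ℝ}

/-- The bound for `∫ H φ` when `H ≤ F + b n`: the source `F` has dual norm at most `A`, the decaying
weight `b` has mass `c`, and `Kn`, `Kφ` control the growth of `n²`, `φ²`. The parameter `s` is the
balance in `2 n φ ≤ s n² + φ² / s`. -/
def pairingBound (A c s Kn Kφ : ℝ) : ℝ := A * √Kφ + c / 2 * (s * Kn + Kφ / s)

lemma pairingBound_nonneg {c : ℝ} (hA : 0 ≤ A) (hc : 0 ≤ c) (hs : 0 ≤ s) (hKn : 0 ≤ Kn)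
    (hKφ : 0 ≤ Kφ) : 0 ≤ pairingBound A c s Kn Kφ := by
  unfold pairingBound
  positivity

lemma ofReal_mul_le_of_weight {H n φ b : ℝ} (hb : 0 ≤ b) (hφ : 0 ≤ φ) (hs : 0 < s) :
    ENNReal.ofReal (H * φ) ≤ ENNReal.ofReal (H - b * n) * ENNReal.ofReal φ
      + (ENNReal.ofReal (s / 2) * (ENNReal.ofReal b * ENNReal.ofReal (n ^ 2))
        + ENNReal.ofReal (1 / (2 * s)) * (ENNReal.ofReal b * ENNReal.ofReal (φ ^ 2))) := by
  have young : n * φ ≤ s / 2 * n ^ 2 + 1 / (2 * s) * φ ^ 2 := by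
    have : s / 2 * n ^ 2 + 1 / (2 * s) * φ ^ 2 - n * φ = (s * n - φ) ^ 2 / (2 * s) := by
      field_simp
      ring
    linarith [show 0 ≤ (s * n - φ) ^ 2 / (2 * s) by positivity]
  have hle : H * φ ≤ (H - b * n) * φ
      + (s / 2 * (b * n ^ 2) + 1 / (2 * s) * (b * φ ^ 2)) := by
    linarith [mul_le_mul_of_nonneg_left young hb]
  rw [← ENNReal.ofReal_mul' hφ, ← ENNReal.ofReal_mul hb, ← ENNReal.ofReal_mul hb,
    ← ENNReal.ofReal_mul (by positivity), ← ENNReal.ofReal_mul (by positivity),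
    ← ENNReal.ofReal_add (by positivity) (by positivity)]
  exact (ENNReal.ofReal_le_ofReal hle).trans ENNReal.ofReal_add_le

lemma lintegral_mul_le_pairingBound (hρ : 0 < ρ) (ha : 0 ≤ a) (hγ : 0 < γ) (hs : 0 < s)
    (hA : 0 ≤ A) (hKn0 : 0 ≤ Kn) (hKφ0 : 0 ≤ Kφ) (hH : Measurable H) (hn : Measurable n)
    (hφ : Measurable φ) (hφ0 : ∀ x, 0 ≤ φ x)
    (hsrc : nXstarr ρ (fun x ↦ ENNReal.ofReal (H x - decayWeight a γ x * n x) ^ 2)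
      ≤ ENNReal.ofReal A)
    (hKn : HasDyadicMassLE ρ (fun x ↦ ENNReal.ofReal (n x ^ 2)) (ENNReal.ofReal Kn))
    (hKφ : HasDyadicMassLE ρ (fun x ↦ ENNReal.ofReal (φ x ^ 2)) (ENNReal.ofReal Kφ)) :
    ∫⁻ x, ENNReal.ofReal (H x * φ x)
      ≤ ENNReal.ofReal (pairingBound A (decayMass a γ ρ) s Kn Kφ) := by
  have hb := (continuous_decayWeight (d := d) a γ).measurable
  have hc := decayMass_nonneg (γ := γ) ha hρ.le
  have hF : Measurable fun x ↦ ENNReal.ofReal (H x - decayWeight a γ x * n x) :=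
    (hH.sub (hb.mul hn)).ennreal_ofReal
  have hKφ' : HasDyadicMassLE ρ (fun x ↦ ENNReal.ofReal (φ x) ^ 2) (ENNReal.ofReal Kφ) := by
    simpa only [ENNReal.ofReal_pow (hφ0 _)] using hKφ
  calc ∫⁻ x, ENNReal.ofReal (H x * φ x)
      ≤ (∫⁻ x, ENNReal.ofReal (H x - decayWeight a γ x * n x) * ENNReal.ofReal (φ x))
        + (ENNReal.ofReal (s / 2)
            * (∫⁻ x, ENNReal.ofReal (decayWeight a γ x) * ENNReal.ofReal (n x ^ 2))
          + ENNReal.ofReal (1 / (2 * s))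
            * (∫⁻ x, ENNReal.ofReal (decayWeight a γ x) * ENNReal.ofReal (φ x ^ 2))) := by
        rw [← lintegral_const_mul' _ _ ENNReal.ofReal_ne_top,
          ← lintegral_const_mul' _ _ ENNReal.ofReal_ne_top,
          ← lintegral_add_left (by fun_prop), ← lintegral_add_left (by fun_prop)]
        exact lintegral_mono fun x ↦ ofReal_mul_le_of_weight (decayWeight_nonneg ha x) (hφ0 x) hs
    _ ≤ ENNReal.ofReal A * ENNReal.ofReal Kφ ^ (1 / 2 : ℝ)
        + (ENNReal.ofReal (s / 2) * (ENNReal.ofReal (decayMass a γ ρ) * ENNReal.ofReal Kn)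
          + ENNReal.ofReal (1 / (2 * s))
            * (ENNReal.ofReal (decayMass a γ ρ) * ENNReal.ofReal Kφ)) := by
        gcongr
        · exact (lintegral_mul_le_nXstarr_mul hρ hF hφ.ennreal_ofReal hKφ').trans (by gcongr)
        · exact lintegral_decayWeight_mul_le hρ ha hγ hKn
        · exact lintegral_decayWeight_mul_le hρ ha hγ hKφ
    _ = ENNReal.ofReal (pairingBound A (decayMass a γ ρ) s Kn Kφ) := by
        rw [ENNReal.ofReal_rpow_of_nonneg hKφ0 (by norm_num), ← Real.sqrt_eq_rpow]
        repeat rw [← ENNReal.ofReal_mul (by positivity)]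
        repeat rw [← ENNReal.ofReal_add (by positivity) (by positivity)]
        congr 1
        unfold pairingBound
        field_simp

lemma integral_le_of_lintegral_ofReal_le {α : Type*} [MeasurableSpace α] {μ : Measure α}
    {g : α → ℝ} {K : ℝ} (hK : 0 ≤ K) (h : ∫⁻ x, ENNReal.ofReal (g x) ∂μ ≤ ENNReal.ofReal K) :
    ∫ x, g x ∂μ ≤ K := by
  by_cases hg : Integrable g μ
  · rw [integral_eq_lintegral_pos_part_sub_lintegral_neg_part hg]
    linarith [ENNReal.toReal_le_of_le_ofReal hK h,
      ENNReal.toReal_nonneg (a := ∫⁻ x, ENNReal.ofReal (-g x) ∂μ)]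
  · rwa [integral_undef hg]

theorem integral_mul_le_pairingBound (hρ : 0 < ρ) (ha : 0 ≤ a) (hγ : 0 < γ) (hs : 0 < s)
    (hA : 0 ≤ A) (hKn0 : 0 ≤ Kn) (hKφ0 : 0 ≤ Kφ) (hH : Measurable H) (hn : Measurable n)
    (hφ : Measurable φ) (hφ0 : ∀ x, 0 ≤ φ x)
    (hsrc : nXstarr ρ (fun x ↦ ENNReal.ofReal (H x - decayWeight a γ x * n x) ^ 2)
      ≤ ENNReal.ofReal A)
    (hKn : HasDyadicMassLE ρ (fun x ↦ ENNReal.ofReal (n x ^ 2)) (ENNReal.ofReal Kn))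
    (hKφ : HasDyadicMassLE ρ (fun x ↦ ENNReal.ofReal (φ x ^ 2)) (ENNReal.ofReal Kφ)) :
    ∫ x, H x * φ x ≤ pairingBound A (decayMass a γ ρ) s Kn Kφ :=
  integral_le_of_lintegral_ofReal_le
    (pairingBound_nonneg hA (decayMass_nonneg ha hρ.le) hs.le hKn0 hKφ0)
    (lintegral_mul_le_pairingBound hρ ha hγ hs hA hKn0 hKφ0 hH hn hφ hφ0 hsrc hKn hKφ)

end Pairing

/-! ### Absorbing the long range terms -/

section Absorption

variable {A c κ s t y r G U S T M : ℝ}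

/-- The right-hand side of the Morawetz inequality, with every integral estimated through the Morrey
quantities `G` of `|∇u|²` and `U`, `S` of `|u|²` (linear and cubic growth). -/
def sourceBound (A c κ s t G U S : ℝ) : ℝ :=
  1 / 2 * (c * (2 * U)) + pairingBound A c s (2 * U) (2 * G)
    + κ * pairingBound A c s (2 * U) (32 * S) + t * pairingBound A c 1 (2 * U) (2 * U)

lemma pairingBound_mul_self_le {k m Kn Kφ : ℝ} (hA : 0 ≤ A) (hy : 0 ≤ y) (hs : 0 < s)
    (hr : 0 ≤ m * r) (hKφ : Kφ ≤ (m * r) ^ 2) (hK : s ^ 2 * Kn + Kφ ≤ 2 * (k * r ^ 2)) :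
    pairingBound A (y * s) s Kn Kφ ≤ A * (m * r) + y * (k * r ^ 2) := by
  calc pairingBound A (y * s) s Kn Kφ = A * √Kφ + y / 2 * (s ^ 2 * Kn + Kφ) := by
        unfold pairingBound
        field_simp
    _ ≤ A * (m * r) + y / 2 * (2 * (k * r ^ 2)) := by
        gcongr
        exact Real.sqrt_le_iff.2 ⟨hr, hKφ⟩
    _ = _ := by ring

lemma mul_pairingBound_le_sourceBound (hA : 0 ≤ A) (hc : 0 ≤ c) (hκ : 0 ≤ κ) (hs : 0 ≤ s)
    (hG : 0 ≤ G) (hU : 0 ≤ U) (hS : 0 ≤ S) :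
    t * pairingBound A c 1 (2 * U) (2 * U) ≤ sourceBound A c κ s t G U S := by
  have hgrad := pairingBound_nonneg hA hc hs (Kn := 2 * U) (Kφ := 2 * G) (by positivity)
    (by positivity)
  have hvirial := pairingBound_nonneg hA hc hs (Kn := 2 * U) (Kφ := 32 * S) (by positivity)
    (by positivity)
  exact le_add_of_nonneg_left (by positivity)

lemma sourceBound_le (hA : 0 ≤ A) (hy : 0 ≤ y) (hκ : 0 ≤ κ) (hs : 1 ≤ s) (hst : s ≤ t)
    (hG : 0 ≤ G) (hU : 0 ≤ U) (hS : 0 ≤ S) (hr : 0 ≤ r) (hGUS : G + s ^ 2 * U + S ≤ r ^ 2)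
    (htU : t ^ 2 * U ≤ 2 * r ^ 2) :
    sourceBound A (y * s) κ s t G U S ≤ (6 + 16 * κ) * (A * r + y * r ^ 2) := by
  have hs0 : 0 < s := by linarith
  have ht0 : 0 < t := by linarith
  have hsU : 0 ≤ s ^ 2 * U := by positivity
  have hmass : y * s * U ≤ y * r ^ 2 := by
    have : s * U ≤ s ^ 2 * U := by gcongr; nlinarith
    rw [mul_assoc]
    gcongr
    linarith
  have hgrad : pairingBound A (y * s) s (2 * U) (2 * G) ≤ A * (2 * r) + y * (1 * r ^ 2) :=
    pairingBound_mul_self_le hA hy hs0 (by positivity) (by nlinarith) (by linarith)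
  have hvirial : pairingBound A (y * s) s (2 * U) (32 * S) ≤ A * (6 * r) + y * (16 * r ^ 2) :=
    pairingBound_mul_self_le hA hy hs0 (by positivity) (by nlinarith) (by linarith)
  have henergy : t * pairingBound A (y * s) 1 (2 * U) (2 * U)
      ≤ A * (2 * r) + y * (2 * (2 * r ^ 2)) := by
    have hsqrt : t * √(2 * U) ≤ 2 * r := by
      rw [← Real.sqrt_sq ht0.le, ← Real.sqrt_mul (sq_nonneg t)]
      exact Real.sqrt_le_iff.2 ⟨by positivity, by linarith⟩
    have hstU : s * t * U ≤ t ^ 2 * U := by gcongr; nlinarith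
    calc _ = A * (t * √(2 * U)) + y * (2 * (s * t * U)) := by unfold pairingBound; ring
      _ ≤ _ := by
        gcongr A * ?_ + y * (2 * ?_)
        exact hstU.trans htU
  unfold sourceBound
  linarith [mul_le_mul_of_nonneg_left hvirial hκ, show 0 ≤ A * r by positivity,
    show 0 ≤ κ * (A * r) by positivity]

lemma le_of_sq_le_mul_add (hr : 0 ≤ r) (hM : 0 ≤ M) (hA : 0 ≤ A) (hrT : r ^ 2 ≤ 27 * T)
    (hT : 27 * T ≤ M * (A * r + y * r ^ 2)) (hy : 2 * (M * y) ≤ 1) : T ≤ 4 * M ^ 2 * A ^ 2 := by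
  have habsorb : M * y * r ^ 2 ≤ 1 / 2 * r ^ 2 := by gcongr; linarith
  have hr_le : r ≤ 2 * (M * A) := by
    rcases hr.eq_or_lt with rfl | hr
    · positivity
    · exact le_of_mul_le_mul_right (by linarith : r * r ≤ 2 * (M * A) * r) hr
  have : M * A * r ≤ M * A * (2 * (M * A)) := by gcongr
  have : r ^ 2 ≤ (2 * (M * A)) ^ 2 := by gcongr
  have : 0 ≤ (M * A) ^ 2 := sq_nonneg _
  linarith

lemma sourceBound_le_of_le_sourceBound {a E τ : ℝ} (hA : 0 ≤ A) (hc : 0 ≤ c) (hκ : 0 ≤ κ)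
    (ha : 0 ≤ a) (hE : 0 ≤ E) (hτ : 1 ≤ τ) (hτa : 2 * a ≤ τ)
    (hM : M = 27 * (6 + 16 * κ)) (hcM : 2 * (M * c) ≤ √τ)
    (hT : T = sourceBound A c κ √τ √(τ + a + E) G U S) (hG0 : 0 ≤ G) (hU0 : 0 ≤ U) (hS0 : 0 ≤ S)
    (hG : G ≤ 6 * T) (hU : τ / 2 * U ≤ 6 * T) (hS : S ≤ 4 * T)
    (hEU : E * U ≤ S + √E * pairingBound A c 1 (2 * U) (2 * U)) : T ≤ 4 * M ^ 2 * A ^ 2 := by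
  have hs : 1 ≤ √τ := Real.one_le_sqrt.2 hτ
  have hs0 : 0 < √τ := by linarith
  have hτ2 : √τ ^ 2 = τ := Real.sq_sqrt (by linarith)
  have ht2 : √(τ + a + E) ^ 2 = τ + a + E := Real.sq_sqrt (by positivity)
  have hUa : a * U ≤ τ * U := by gcongr; linarith
  have hUE : 0 ≤ E * U := by positivity
  have hpair : √E * pairingBound A c 1 (2 * U) (2 * U) ≤ T := by
    have := pairingBound_nonneg hA hc zero_le_one (Kn := 2 * U) (Kφ := 2 * U) (by positivity)
      (by positivity)
    rw [hT]
    refine le_trans ?_ (mul_pairingBound_le_sourceBound hA hc hκ hs0.le hG0 hU0 hS0)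
    gcongr
    linarith
  set X := G + τ * U + E * U + S
  have hX0 : 0 ≤ X := by positivity
  have hbound : T ≤ (6 + 16 * κ) * (A * √X + c / √τ * √X ^ 2) := by
    rw [hT]
    nth_rw 1 [← div_mul_cancel₀ c hs0.ne']
    refine sourceBound_le hA (by positivity) hκ hs (Real.sqrt_le_sqrt (by linarith)) hG0 hU0 hS0
      (Real.sqrt_nonneg X) ?_ ?_
    · rw [Real.sq_sqrt hX0, hτ2]
      linarith
    · rw [Real.sq_sqrt hX0, ht2]
      linarith
  refine le_of_sq_le_mul_add (y := c / √τ) (Real.sqrt_nonneg X) (hM ▸ by positivity) hA ?_ ?_ ?_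
  · rw [Real.sq_sqrt hX0]
    linarith
  · rw [hM]
    linarith
  · rwa [← mul_div_assoc, ← mul_div_assoc, div_le_one hs0]

end Absorption

section MorreyReal

variable {d : ℕ} {ρ R κ K : ℝ} {g : Ed d → ℝ}

/-- The real number `sup_{R ≥ ρ} R^{-p} ∫_{B(0,R)} g²`. It is `0` when the supremum is infinite,
which does not happen for `g ∈ L²`. -/
def morreyReal (p : ℕ) (ρ : ℝ) (g : Ed d → ℝ) : ℝ :=
  (morreySup p ρ fun x ↦ ENNReal.ofReal (g x ^ 2)).toReal

lemma morreyReal_nonneg (p : ℕ) (ρ : ℝ) (g : Ed d → ℝ) : 0 ≤ morreyReal p ρ g :=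
  ENNReal.toReal_nonneg

lemma ofReal_morreyReal (p : ℕ) (hρ : 0 < ρ) (hg : MemLp g 2) :
    ENNReal.ofReal (morreyReal p ρ g) = morreySup p ρ fun x ↦ ENNReal.ofReal (g x ^ 2) :=
  ENNReal.ofReal_toReal (morreySup_ne_top p hρ hg.integrable_sq.lintegral_lt_top.ne)

lemma hasDyadicMassLE_morreyReal_one (hρ : 0 < ρ) (hg : MemLp g 2) :
    HasDyadicMassLE ρ (fun x ↦ ENNReal.ofReal (g x ^ 2))
      (ENNReal.ofReal (2 * morreyReal 1 ρ g)) := by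
  rw [ENNReal.ofReal_mul zero_le_two, ofReal_morreyReal 1 hρ hg, ENNReal.ofReal_ofNat]
  exact hasDyadicMassLE_morreySup_one hρ _

lemma hasDyadicMassLE_radialWeight_mul (hρ : 0 < ρ) (hR : ρ ≤ R) (hg : MemLp g 2) :
    HasDyadicMassLE ρ (fun x ↦ ENNReal.ofReal ((radialWeight R x * g x) ^ 2))
      (ENNReal.ofReal (32 * morreyReal 3 ρ g)) := by
  have h := hasDyadicMassLE_radialWeight_pow_mul 2 hρ hR fun x ↦ ENNReal.ofReal (g x ^ 2)
  simp_rw [← ENNReal.ofReal_mul (sq_nonneg _), ← mul_pow] at h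
  rw [ENNReal.ofReal_mul (by norm_num), ofReal_morreyReal 3 hρ hg]
  norm_num at h ⊢
  exact h

lemma integrable_decayWeight_mul_sq {a γ : ℝ} (ha : 0 ≤ a) (hγ : 0 < γ) (hg : MemLp g 2) :
    Integrable fun x ↦ decayWeight a γ x * g x ^ 2 :=
  hg.integrable_sq.bdd_mul (continuous_decayWeight a γ).aestronglyMeasurable
    (.of_forall fun x ↦ (Real.norm_of_nonneg (decayWeight_nonneg ha x)).trans_le
      (decayWeight_le ha hγ x))

lemma integral_decayWeight_mul_sq_le {a γ : ℝ} (hρ : 0 < ρ) (ha : 0 ≤ a) (hγ : 0 < γ)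
    (hg : MemLp g 2) :
    ∫ x, decayWeight a γ x * g x ^ 2 ≤ decayMass a γ ρ * (2 * morreyReal 1 ρ g) := by
  have hc := decayMass_nonneg (γ := γ) ha hρ.le
  have hU := morreyReal_nonneg 1 ρ g
  refine integral_le_of_lintegral_ofReal_le (by positivity) ?_
  simp_rw [ENNReal.ofReal_mul (decayWeight_nonneg ha _), ENNReal.ofReal_mul hc]
  exact lintegral_decayWeight_mul_le hρ ha hγ (hasDyadicMassLE_morreyReal_one hρ hg)

-- Balls with `κ R² ≤ 1` are handled by the cubic growth of `g²`, larger ones by its total mass.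
lemma mul_morreyReal_one_le (hρ : 0 < ρ) (hg : MemLp g 2) (hκ : 0 ≤ κ)
    (hK : κ * (∫ x, g x ^ 2) ≤ K) :
    κ * morreyReal 1 ρ g ≤ morreyReal 3 ρ g + √κ * K := by
  have hS := morreyReal_nonneg 3 ρ g
  have hK0 : 0 ≤ K := le_trans (mul_nonneg hκ (integral_nonneg fun x ↦ sq_nonneg (g x))) hK
  rcases hκ.eq_or_lt with rfl | hκ
  · simpa using hS
  rw [mul_comm, ← le_div_iff₀ hκ]
  refine ENNReal.toReal_le_of_le_ofReal (by positivity) (morreySup_le fun R hR ↦ ?_)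
  have hR0 := hρ.trans_le hR
  rw [← ENNReal.ofReal_mul (by positivity)]
  rcases le_or_gt (κ * R ^ 2) 1 with hsmall | hlarge
  · refine (lintegral_ball_le_morreySup 3 hρ hR _).trans ?_
    rw [← ofReal_morreyReal 3 hρ hg, ← ENNReal.ofReal_mul (by positivity)]
    refine ENNReal.ofReal_le_ofReal ?_
    rw [mul_div_assoc', le_div_iff₀ hκ]
    calc R ^ 3 * morreyReal 3 ρ g * κ = R * (κ * R ^ 2 * morreyReal 3 ρ g) := by ring
      _ ≤ R ^ 1 * (1 * morreyReal 3 ρ g) := by rw [pow_one]; gcongr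
      _ ≤ R ^ 1 * (morreyReal 3 ρ g + √κ * K) := by
          gcongr
          linarith [show 0 ≤ √κ * K by positivity]
  · refine (setLIntegral_le_lintegral _ _).trans ?_
    rw [← ofReal_integral_eq_lintegral_ofReal hg.integrable_sq (.of_forall fun x ↦ sq_nonneg _)]
    refine ENNReal.ofReal_le_ofReal ?_
    have hRκ : 1 ≤ R * √κ := by
      refine (one_le_sq_iff₀ (by positivity)).1 ?_
      rw [mul_pow, Real.sq_sqrt hκ.le]
      linarith
    rw [mul_div_assoc', le_div_iff₀ hκ]
    calc (∫ x, g x ^ 2) * κ ≤ 1 * K := by linarith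
      _ ≤ R * √κ * K := by gcongr
      _ ≤ R ^ 1 * (morreyReal 3 ρ g + √κ * K) := by linarith [mul_nonneg hR0.le hS]

namespace IsMorawetzBound

variable {Z : Ed d → ℝ} {u : Ed d → ℂ} {T : ℝ}

lemma morreyReal_gradNorm_le (h : IsMorawetzBound ρ Z u T) (hd : 3 ≤ d) (hρ : 0 < ρ)
    (hZ : ∀ x, Z x ≤ 0) : morreyReal 1 ρ (gradNorm u) ≤ 6 * T := by
  have hle := h.morreySup_gradSq_le hd hρ hZ
  simp_rw [funext (gradSq_eq_ofReal u)] at hle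
  exact ENNReal.toReal_le_of_le_ofReal (mul_nonneg (by norm_num) (h.nonneg hd hρ hZ)) hle

lemma mul_morreyReal_norm_le (h : IsMorawetzBound ρ Z u T) (hd : 3 ≤ d) (hρ : 0 < ρ) (hκ : 0 < κ)
    (hZ : ∀ x, κ ≤ -Z x) : κ * morreyReal 1 ρ (fun x ↦ ‖u x‖) ≤ 6 * T := by
  have hle := h.ofReal_mul_morreySup_usq_le hd hρ hκ hZ
  simp_rw [funext (usq_eq_ofReal u)] at hle
  have hT := h.nonneg hd hρ fun x ↦ by linarith [hZ x]
  simpa [morreyReal, hκ.le] using ENNReal.toReal_le_of_le_ofReal (by positivity) hle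

lemma morreyReal_three_norm_le (h : IsMorawetzBound ρ Z u T) (hd : 3 ≤ d) (hρ : 0 < ρ)
    (hZ : ∀ x, Z x ≤ 0) : morreyReal 3 ρ (fun x ↦ ‖u x‖) ≤ 4 * T := by
  have hle := h.morreySup_three_usq_le hd hρ hZ
  simp_rw [funext (usq_eq_ofReal u)] at hle
  exact ENNReal.toReal_le_of_le_ofReal (mul_nonneg (by norm_num) (h.nonneg hd hρ hZ)) hle

end IsMorawetzBound

end MorreyReal

section LongRange

variable {d : ℕ} {ρ a γ τ e A R s t : ℝ} {Z : Ed d → ℝ} {u : Ed d → ℂ}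

/-- `u ∈ H¹` solves `-Δu + Zu + ieu = h` with `h ∈ L²`, where `Z = V₁ - τ` for a long range
potential `V₁` and `|h| ≤ F + b|u|` with `b` the decaying weight and `F` of dual norm at most `A`.
The short range potential is thus part of the source `h`. -/
structure IsLongRangeSolution (ρ a γ τ e A : ℝ) (Z : Ed d → ℝ) (u : Ed d → ℂ) : Prop where
  contDiff_potential : ContDiff ℝ 1 Z
  contDiff : ContDiff ℝ 2 u
  memLp : MemLp u 2
  memLp_gradNorm : MemLp (gradNorm u) 2
  memLp_schrodingerOp : MemLp (schrodingerOp Z e u) 2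
  abs_add_le : ∀ x, |Z x + τ| ≤ a
  fderiv_le : ∀ x, fderiv ℝ Z x x ≤ ‖x‖ * decayWeight a γ x
  source_le : nXstarr ρ (fun x ↦
    ENNReal.ofReal (‖schrodingerOp Z e u x‖ - decayWeight a γ x * ‖u x‖) ^ 2) ≤ ENNReal.ofReal A

/-- The constant of the absorption argument: long range terms are absorbed once `√τ` exceeds
`2 * absorptionConst d` times the mass of the decaying weight. -/
def absorptionConst (d : ℕ) : ℝ := 27 * (6 + 16 * virialConst d)

lemma absorptionConst_pos (hd : 1 ≤ d) : 0 < absorptionConst d := by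
  have := virialConst_nonneg hd
  unfold absorptionConst
  positivity

namespace IsLongRangeSolution

lemma nonneg (h : IsLongRangeSolution ρ a γ τ e A Z u) : 0 ≤ a :=
  (abs_nonneg _).trans (h.abs_add_le 0)

lemma abs_potential_le (h : IsLongRangeSolution ρ a γ τ e A Z u) (x : Ed d) : |Z x| ≤ a + |τ| := by
  linarith [h.abs_add_le x, abs_sub_abs_le_abs_add (Z x) τ]

lemma integral_norm_mul_le (h : IsLongRangeSolution ρ a γ τ e A Z u) (hρ : 0 < ρ) (hγ : 0 < γ)
    (hA : 0 ≤ A) (hs : 0 < s) {φ : Ed d → ℝ} {K : ℝ} (hφ : Continuous φ) (hφ0 : ∀ x, 0 ≤ φ x)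
    (hK0 : 0 ≤ K) (hK : HasDyadicMassLE ρ (fun x ↦ ENNReal.ofReal (φ x ^ 2)) (ENNReal.ofReal K)) :
    ∫ x, ‖schrodingerOp Z e u x‖ * φ x
      ≤ pairingBound A (decayMass a γ ρ) s (2 * morreyReal 1 ρ (fun x ↦ ‖u x‖)) K :=
  integral_mul_le_pairingBound hρ h.nonneg hγ hs hA
    (mul_nonneg zero_le_two (morreyReal_nonneg 1 ρ _)) hK0
    (continuous_schrodingerOp h.contDiff_potential.continuous h.contDiff).norm.measurable
    h.contDiff.continuous.norm.measurable hφ.measurable hφ0 h.source_le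
    (hasDyadicMassLE_morreyReal_one hρ h.memLp.norm) hK

lemma integral_norm_mul_norm_le (h : IsLongRangeSolution ρ a γ τ e A Z u) (hρ : 0 < ρ)
    (hγ : 0 < γ) (hA : 0 ≤ A) :
    ∫ x, ‖schrodingerOp Z e u x‖ * ‖u x‖
      ≤ pairingBound A (decayMass a γ ρ) 1 (2 * morreyReal 1 ρ (fun x ↦ ‖u x‖))
        (2 * morreyReal 1 ρ (fun x ↦ ‖u x‖)) :=
  h.integral_norm_mul_le hρ hγ hA one_pos h.contDiff.continuous.norm (fun _ ↦ norm_nonneg _)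
    (mul_nonneg zero_le_two (morreyReal_nonneg 1 ρ _))
    (hasDyadicMassLE_morreyReal_one hρ h.memLp.norm)

lemma abs_mul_morreyReal_le (h : IsLongRangeSolution ρ a γ τ e A Z u) (hρ : 0 < ρ) (hγ : 0 < γ)
    (hA : 0 ≤ A) :
    |e| * morreyReal 1 ρ (fun x ↦ ‖u x‖) ≤ morreyReal 3 ρ (fun x ↦ ‖u x‖)
      + √|e| * pairingBound A (decayMass a γ ρ) 1 (2 * morreyReal 1 ρ (fun x ↦ ‖u x‖))
        (2 * morreyReal 1 ρ (fun x ↦ ‖u x‖)) :=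
  mul_morreyReal_one_le hρ h.memLp.norm (abs_nonneg e)
    ((abs_mul_integral_norm_sq_le h.contDiff h.memLp h.memLp_gradNorm
      h.contDiff_potential.continuous h.abs_potential_le h.memLp_schrodingerOp).trans
      (h.integral_norm_mul_norm_le hρ hγ hA))

lemma isMorawetzBound_sourceBound (h : IsLongRangeSolution ρ a γ τ e A Z u) (hd : 1 ≤ d)
    (hρ : 0 < ρ) (hγ : 0 < γ) (hA : 0 ≤ A) (hτ : 0 ≤ τ) (hs : 0 < s) (ht : 0 < t)
    (hτt : τ + a + |e| ≤ t ^ 2) :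
    IsMorawetzBound ρ Z u (sourceBound A (decayMass a γ ρ) (virialConst d) s t
      (morreyReal 1 ρ (gradNorm u)) (morreyReal 1 ρ (fun x ↦ ‖u x‖))
      (morreyReal 3 ρ (fun x ↦ ‖u x‖))) := by
  intro R hR
  have hR0 := hρ.trans_le hR
  have hZ := h.contDiff_potential.continuous
  have hκ := virialConst_nonneg hd
  have hmass := integral_decayWeight_mul_sq_le hρ h.nonneg hγ h.memLp.norm
  have hgrad := h.integral_norm_mul_le hρ hγ hA hs
    (continuous_gradNorm (h.contDiff.of_le one_le_two)) (gradNorm_nonneg u)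
    (mul_nonneg zero_le_two (morreyReal_nonneg 1 ρ _))
    (hasDyadicMassLE_morreyReal_one hρ h.memLp_gradNorm)
  have hvirial := h.integral_norm_mul_le hρ hγ hA hs
    ((contDiff_radialWeight hR0 (n := 0)).continuous.mul h.contDiff.continuous.norm)
    (fun x ↦ mul_nonneg (radialWeight_pos hR0 x).le (norm_nonneg _))
    (mul_nonneg (by norm_num) (morreyReal_nonneg 3 ρ _))
    (hasDyadicMassLE_radialWeight_mul hρ hR h.memLp.norm)
  have henergy := abs_mul_integral_norm_mul_gradNorm_le h.contDiff h.memLp h.memLp_gradNorm hZ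
    h.abs_potential_le h.memLp_schrodingerOp (L := τ + a)
    (fun x ↦ by linarith [neg_le_of_abs_le (h.abs_add_le x)]) (add_nonneg hτ h.nonneg) ht hτt
  refine ⟨integrable_morawetzForm h.memLp h.memLp_gradNorm hd hR0 hZ h.abs_potential_le,
    (integral_morawetzForm_le h.memLp h.memLp_gradNorm hd hR0 h.contDiff_potential
      h.abs_potential_le h.contDiff h.memLp_schrodingerOp (decayWeight_nonneg h.nonneg)
      (integrable_decayWeight_mul_sq h.nonneg hγ h.memLp.norm) h.fderiv_le).trans ?_⟩
  unfold sourceBound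
  refine add_le_add ?_ (henergy.trans ?_)
  · gcongr
    exact hvirial
  · gcongr
    exact h.integral_norm_mul_norm_le hρ hγ hA

theorem isMorawetzBound (h : IsLongRangeSolution ρ a γ τ e A Z u) (hd : 3 ≤ d) (hρ : 0 < ρ)
    (hγ : 0 < γ) (hA : 0 ≤ A) (hτ : 1 ≤ τ) (hτa : 2 * a ≤ τ)
    (hτM : 2 * (absorptionConst d * decayMass a γ ρ) ≤ √τ) :
    IsMorawetzBound ρ Z u (4 * absorptionConst d ^ 2 * A ^ 2) := by
  have hd1 : 1 ≤ d := by lia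
  have hZ (x : Ed d) : τ / 2 ≤ -Z x := by linarith [le_of_abs_le (h.abs_add_le x)]
  have hZ0 (x : Ed d) : Z x ≤ 0 := by linarith [hZ x]
  have hτ0 : 0 < τ := by linarith
  have hτe : 0 < τ + a + |e| := by linarith [h.nonneg, abs_nonneg e]
  have hbound := h.isMorawetzBound_sourceBound hd1 hρ hγ hA hτ0.le (Real.sqrt_pos.2 hτ0)
    (Real.sqrt_pos.2 hτe) (Real.sq_sqrt hτe.le).ge
  have habsorb := sourceBound_le_of_le_sourceBound hA (decayMass_nonneg h.nonneg hρ.le)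
    (virialConst_nonneg hd1) h.nonneg (abs_nonneg e) hτ hτa rfl hτM rfl
    (morreyReal_nonneg 1 ρ _) (morreyReal_nonneg 1 ρ _) (morreyReal_nonneg 3 ρ _)
    (hbound.morreyReal_gradNorm_le hd hρ hZ0)
    (hbound.mul_morreyReal_norm_le hd hρ (by linarith) hZ)
    (hbound.morreyReal_three_norm_le hd hρ hZ0) (h.abs_mul_morreyReal_le hρ hγ hA)
  exact fun R hR ↦ ⟨(hbound R hR).1, (hbound R hR).2.trans habsorb⟩

end IsLongRangeSolution

end LongRange

/-! ### The resolvent estimate -/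

section Resolvent

variable {d : ℕ}

lemma setLIntegral_trace_le_morreySup {ρ R : ℝ} {u : Ed d → ℂ} (hρ : 0 < ρ) (hR : ρ ≤ R)
    (hu : Continuous u) :
    ∫⁻ x in ball (0 : Ed d) R,
        ENNReal.ofReal ((d + 1) * ‖u x‖ ^ 2 + R ^ 2 * gradNorm u x ^ 2)
      ≤ ENNReal.ofReal R * (ENNReal.ofReal (R ^ 2)
        * (ENNReal.ofReal (d + 1) * morreySup 3 ρ (usq u) + morreySup 1 ρ (gradSq u))) := by
  have hR0 := hρ.trans_le hR
  calc _ = ENNReal.ofReal (d + 1) * (∫⁻ x in ball (0 : Ed d) R, usq u x)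
        + ENNReal.ofReal (R ^ 2) * ∫⁻ x in ball (0 : Ed d) R, gradSq u x := by
        rw [← lintegral_const_mul' _ _ ENNReal.ofReal_ne_top,
          ← lintegral_const_mul' _ _ ENNReal.ofReal_ne_top,
          ← lintegral_add_left (by simp_rw [usq_eq_ofReal]; fun_prop)]
        refine lintegral_congr fun x ↦ ?_
        rw [ENNReal.ofReal_add (by positivity) (by positivity), ENNReal.ofReal_mul (by positivity),
          ENNReal.ofReal_mul (by positivity), usq_eq_ofReal, gradSq_eq_ofReal]
    _ ≤ ENNReal.ofReal (d + 1) * (ENNReal.ofReal (R ^ 3) * morreySup 3 ρ (usq u))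
        + ENNReal.ofReal (R ^ 2) * (ENNReal.ofReal (R ^ 1) * morreySup 1 ρ (gradSq u)) := by
        gcongr <;> exact lintegral_ball_le_morreySup _ hρ hR _
    _ = _ := by
        simp only [ENNReal.ofReal_pow hR0.le]
        ring

lemma exists_iSup_sphInt_le (hd : 1 ≤ d) :
    ∃ C : ℝ≥0∞, C ≠ ⊤ ∧ ∀ u : Ed d → ℂ, ContDiff ℝ 1 u → ∀ ρ > 0,
      (⨆ (R : ℝ) (_ : ρ ≤ R), (ENNReal.ofReal (R ^ 2))⁻¹ * sphInt R (usq u))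
        ≤ C * (ENNReal.ofReal (d + 1) * morreySup 3 ρ (usq u) + morreySup 1 ρ (gradSq u)) := by
  obtain ⟨C, hC, hsph⟩ := exists_sphInt_le hd
  refine ⟨C, hC, fun u hu ρ hρ ↦ iSup₂_le fun R hR ↦ ?_⟩
  have hR0 : 0 < R := hρ.trans_le hR
  rw [← ENNReal.div_eq_inv_mul]
  refine ENNReal.div_le_of_le_mul' ((ENNReal.mul_le_mul_iff_right
    (ENNReal.ofReal_pos.2 hR0).ne' ENNReal.ofReal_ne_top).1 ((hsph u hu R hR0).trans ?_))
  refine (mul_le_mul_right (setLIntegral_trace_le_morreySup hρ hR hu.continuous) C).trans_eq ?_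
  ring

lemma IsMorawetzBound.exists_resolvent_norms_le (hd : 3 ≤ d) :
    ∃ C : ℝ, 0 < C ∧ ∀ {ρ τ T : ℝ} {Z : Ed d → ℝ} {u : Ed d → ℂ}, IsMorawetzBound ρ Z u T →
      0 < ρ → 0 < τ → (∀ x, τ / 2 ≤ -Z x) → ContDiff ℝ 1 u →
      nX2r ρ (gradSq u) + ENNReal.ofReal τ * nX2r ρ (usq u)
          + ENNReal.ofReal (d - 3)
            * (∫⁻ x in {x : Ed d | ρ < ‖x‖}, usq u x / ENNReal.ofReal (‖x‖ ^ 3))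
          + (⨆ (R : ℝ) (_ : ρ ≤ R), (ENNReal.ofReal (R ^ 2))⁻¹ * sphInt R (usq u))
        ≤ ENNReal.ofReal (C * T) := by
  obtain ⟨C, hC, hsph⟩ := exists_iSup_sphInt_le (d := d) (by lia)
  refine ⟨6 + 2 * 6 + 12 + C.toReal * ((d + 1) * 4 + 6), by positivity,
    fun {ρ τ T Z u} h hρ hτ hZ hu ↦ ?_⟩
  have hZ0 (x : Ed d) : Z x ≤ 0 := by linarith [hZ x]
  have hT := h.nonneg hd hρ hZ0
  have hcubic := h.morreySup_three_usq_le hd hρ hZ0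
  have hgrad := h.morreySup_gradSq_le hd hρ hZ0
  have hmass : ENNReal.ofReal τ * morreySup 1 ρ (usq u) ≤ ENNReal.ofReal (2 * (6 * T)) := by
    rw [show τ = 2 * (τ / 2) by ring, ENNReal.ofReal_mul zero_le_two,
      ENNReal.ofReal_mul zero_le_two, mul_assoc]
    gcongr
    exact h.ofReal_mul_morreySup_usq_le hd hρ (by positivity) hZ
  have hsphere : C * (ENNReal.ofReal (d + 1) * morreySup 3 ρ (usq u) + morreySup 1 ρ (gradSq u))
      ≤ ENNReal.ofReal (C.toReal * ((d + 1) * (4 * T) + 6 * T)) := by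
    rw [ENNReal.ofReal_mul (by positivity), ENNReal.ofReal_toReal hC,
      ENNReal.ofReal_add (p := (d + 1) * (4 * T)) (by positivity) (by positivity),
      ENNReal.ofReal_mul (by positivity)]
    gcongr
  rw [nX2r_eq_morreySup, nX2r_eq_morreySup]
  refine (add_le_add (add_le_add (add_le_add hgrad hmass) (h.lintegral_usq_div_le hd hρ hZ0))
    ((hsph u hu ρ hρ).trans hsphere)).trans_eq ?_
  repeat rw [← ENNReal.ofReal_add (by positivity) (by positivity)]
  congr 1
  ring

lemma memLp_two_of_lintegral_ofReal_sq {α E : Type*} [MeasurableSpace α] {μ : Measure α}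
    [NormedAddCommGroup E] {g : α → E} (hg : AEStronglyMeasurable g μ)
    (h : ∫⁻ x, ENNReal.ofReal (‖g x‖ ^ 2) ∂μ < ⊤) : MemLp g 2 μ :=
  (memLp_two_iff_integrable_sq_norm hg).2
    ⟨hg.norm.pow 2, (hasFiniteIntegral_iff_ofReal (.of_forall fun _ ↦ sq_nonneg _)).2 h⟩

lemma memLp_two_of_norm_le_add {u f h : Ed d → ℂ} {a : ℝ} (hu : Continuous u) (hh : Continuous h)
    (hu2 : ∫⁻ x, usq u x < ⊤) (hf2 : ∫⁻ x, usq f x < ⊤) (hle : ∀ x, ‖h x‖ ≤ ‖f x‖ + a * ‖u x‖) :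
    MemLp h 2 := by
  refine memLp_two_of_lintegral_ofReal_sq hh.aestronglyMeasurable ?_
  have hsq (x : Ed d) : ENNReal.ofReal (‖h x‖ ^ 2)
      ≤ 2 * usq f x + ENNReal.ofReal (2 * a ^ 2) * usq u x := by
    rw [usq_eq_ofReal, usq_eq_ofReal, ← ENNReal.ofReal_ofNat, ← ENNReal.ofReal_mul zero_le_two,
      ← ENNReal.ofReal_mul (by positivity), ← ENNReal.ofReal_add (by positivity) (by positivity)]
    gcongr
    linarith [pow_le_pow_left₀ (norm_nonneg _) (hle x) 2, sq_nonneg (‖f x‖ - a * ‖u x‖)]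
  refine (lintegral_mono hsq).trans_lt ?_
  rw [lintegral_add_right _ (by simp_rw [usq_eq_ofReal]; fun_prop),
    lintegral_const_mul' _ _ ENNReal.ofNat_ne_top, lintegral_const_mul' _ _ ENNReal.ofReal_ne_top]
  exact ENNReal.add_lt_top.2 ⟨ENNReal.mul_lt_top ENNReal.ofNat_lt_top hf2,
    ENNReal.mul_lt_top ENNReal.ofReal_lt_top hu2⟩

lemma fderiv_apply_self_le_of_radialDeriv_le {V : Ed d → ℝ} {x : Ed d} {b : ℝ}
    (h : radialDeriv V x ≤ b) : fderiv ℝ V x x ≤ ‖x‖ * b := by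
  rcases eq_or_ne x 0 with rfl | hx
  · simp
  · rw [mul_comm]
    exact (div_le_iff₀ (norm_pos_iff.2 hx)).1 h

lemma isLongRangeSolution_of_eq {ρ a γ τ e : ℝ} {V₁ V₂ : Ed d → ℝ} {u f : Ed d → ℂ} (ha : 0 ≤ a)
    (hγ : 0 < γ) (hV₁ : ContDiff ℝ 1 V₁) (hV₁_le : ∀ x, |V₁ x| ≤ a * (1 + ‖x‖) ^ (-γ))
    (hV₂_le : ∀ x, |V₂ x| ≤ decayWeight a γ x) (hV₁_rad : ∀ x, radialDeriv V₁ x ≤ decayWeight a γ x)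
    (hu : ContDiff ℝ 2 u) (hu2 : ∫⁻ x, usq u x < ⊤) (hg2 : ∫⁻ x, gradSq u x < ⊤)
    (hf2 : ∫⁻ x, usq f x < ⊤) (hf : nXstarr ρ (usq f) ≠ ⊤)
    (heq : ∀ x, schrodingerOp (fun y ↦ V₁ y - τ) e u x = f x - V₂ x * u x) :
    IsLongRangeSolution ρ a γ τ e (nXstarr ρ (usq f)).toReal (fun x ↦ V₁ x - τ) u := by
  have hZ : ContDiff ℝ 1 fun x ↦ V₁ x - τ := hV₁.sub contDiff_const
  have hgrad := continuous_gradNorm (hu.of_le one_le_two)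
  have hsource (x : Ed d) :
      ‖schrodingerOp (fun y ↦ V₁ y - τ) e u x‖ ≤ ‖f x‖ + decayWeight a γ x * ‖u x‖ := by
    rw [heq]
    refine (norm_sub_le _ _).trans ?_
    rw [norm_mul, Complex.norm_real]
    gcongr
    exact hV₂_le x
  refine ⟨hZ, hu, memLp_two_of_lintegral_ofReal_sq hu.continuous.aestronglyMeasurable ?_,
    memLp_two_of_lintegral_ofReal_sq hgrad.aestronglyMeasurable ?_,
    memLp_two_of_norm_le_add (a := a) hu.continuous (continuous_schrodingerOp hZ.continuous hu)
      hu2 hf2 fun x ↦ (hsource x).trans ?_, fun x ↦ ?_, fun x ↦ ?_, ?_⟩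
  · simpa only [usq_eq_ofReal] using hu2
  · simpa only [gradSq_eq_ofReal, Real.norm_eq_abs, sq_abs] using hg2
  · gcongr
    exact decayWeight_le ha hγ x
  · rw [sub_add_cancel]
    exact (hV₁_le x).trans (mul_le_of_le_one_right ha
      (Real.rpow_le_one_of_one_le_of_nonpos (by simp) (by linarith)))
  · rw [fderiv_sub_const]
    exact fderiv_apply_self_le_of_radialDeriv_le (hV₁_rad x)
  · rw [ENNReal.ofReal_toReal hf]
    refine nXstarr_mono ρ fun x ↦ ?_
    rw [usq_eq_ofReal, ENNReal.ofReal_pow (norm_nonneg _)]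
    gcongr
    linarith [hsource x]

/-- The function `B(τ₀)` of the resolvent estimate: beyond it the energy `τ` dominates the potential
and absorbs the mass of its decaying weight at scale `τ₀`. -/
def resolventThreshold (d : ℕ) (a γ ρ : ℝ) : ℝ :=
  1 + 2 * a + (2 * (absorptionConst d * decayMass a γ ρ)) ^ 2

lemma resolventThreshold_pos (d : ℕ) {a : ℝ} (ha : 0 ≤ a) (γ ρ : ℝ) :
    0 < resolventThreshold d a γ ρ := by
  unfold resolventThreshold
  positivity

lemma tendsto_mul_resolventThreshold (d : ℕ) (a γ : ℝ) :
    Tendsto (fun ρ ↦ ρ * resolventThreshold d a γ ρ) (𝓝[>] 0) (𝓝 0) := by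
  have hcont : Continuous fun ρ ↦ ρ * resolventThreshold d a γ ρ := by
    unfold resolventThreshold decayMass
    fun_prop
  simpa [ContinuousWithinAt] using hcont.continuousWithinAt (s := Ioi 0) (x := 0)

theorem IsLongRangeSolution.isMorawetzBound_of_resolventThreshold_le {ρ a γ τ e A : ℝ}
    {Z : Ed d → ℝ} {u : Ed d → ℂ} (h : IsLongRangeSolution ρ a γ τ e A Z u) (hd : 3 ≤ d)
    (hρ : 0 < ρ) (hγ : 0 < γ) (hA : 0 ≤ A) (hτ : resolventThreshold d a γ ρ ≤ τ) :
    IsMorawetzBound ρ Z u (4 * absorptionConst d ^ 2 * A ^ 2) := by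
  have hsq := sq_nonneg (2 * (absorptionConst d * decayMass a γ ρ))
  unfold resolventThreshold at hτ
  exact h.isMorawetzBound hd hρ hγ hA (by linarith [h.nonneg]) (by linarith)
    (Real.le_sqrt_of_sq_le (by linarith [h.nonneg]))

end Resolvent

/-- resolvent estimate for long range potentials without smallness
assumptions, d ≥ 3, for `τ ≥ B(τ₀)` with `τ₀ B(τ₀) = o(1)` as `τ₀ → 0`. -/
theorem stmt_7 (d : ℕ) (hd : 3 ≤ d) (a γ : ℝ) (ha : 0 < a) (hγ : 0 < γ) :
    ∃ B : ℝ → ℝ, (∀ τ₀ > (0:ℝ), 0 < B τ₀) ∧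
      Filter.Tendsto (fun τ₀ => τ₀ * B τ₀) (nhdsWithin 0 (Set.Ioi 0)) (nhds 0) ∧
      ∃ C : ℝ, 0 < C ∧
      ∀ (V₁ V₂ : Ed d → ℝ), ContDiff ℝ 1 V₁ →
      (∀ x : Ed d, |V₁ x| ≤ a * (1 + ‖x‖) ^ (-γ)) →
      (∀ x : Ed d, |V₂ x| ≤ a * (1 + ‖x‖) ^ (-γ - 1)) →
      (∀ x : Ed d, radialDeriv V₁ x ≤ a * (1 + ‖x‖) ^ (-γ - 1)) →
      ∀ (τ₀ : ℝ), 0 < τ₀ →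
      ∀ (ε τ : ℝ), ε ≠ 0 → B τ₀ ≤ τ →
      ∀ (σ : ℝ), σ = 1 ∨ σ = -1 →
      ∀ (u f : Ed d → ℂ), ContDiff ℝ 2 u →
      (∫⁻ x, usq u x) < ⊤ → (∫⁻ x, gradSq u x) < ⊤ → (∫⁻ x, usq f x) < ⊤ →
      (∀ x, -lap u x + ((V₁ x : ℂ) + (V₂ x : ℂ)) * u x
        + (σ : ℂ) * ((ε : ℂ) * Complex.I) * u x - (τ : ℂ) * u x = f x) →
      nX2r τ₀ (gradSq u)
        + ENNReal.ofReal τ * nX2r τ₀ (usq u)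
        + ENNReal.ofReal ((d:ℝ) - 3) *
            (∫⁻ x in {x : Ed d | τ₀ < ‖x‖}, usq u x / ENNReal.ofReal (‖x‖^3))
        + (⨆ (R : ℝ) (_ : τ₀ ≤ R), (ENNReal.ofReal (R^2))⁻¹ * sphInt R (usq u))
      ≤ ENNReal.ofReal C * (nXstarr τ₀ (usq f)) ^ 2 := by
  obtain ⟨C, hC, hnorms⟩ := IsMorawetzBound.exists_resolvent_norms_le hd
  have hM := absorptionConst_pos (d := d) (by lia)
  refine ⟨resolventThreshold d a γ, fun τ₀ _ ↦ resolventThreshold_pos d ha.le γ τ₀,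
    tendsto_mul_resolventThreshold d a γ, C * (4 * absorptionConst d ^ 2), by positivity, ?_⟩
  intro V₁ V₂ hV₁ hV₁_le hV₂_le hV₁_rad τ₀ hτ₀ ε τ _ hτ σ _ u f hu hu2 hg2 hf2 heq
  rcases eq_or_ne (nXstarr τ₀ (usq f)) ⊤ with hf | hf
  · rw [hf, ENNReal.top_pow two_ne_zero, ENNReal.mul_top (by positivity)]
    exact le_top
  have heq' (x : Ed d) : schrodingerOp (fun y ↦ V₁ y - τ) (σ * ε) u x = f x - V₂ x * u x := by
    simp only [← heq x, schrodingerOp, Complex.real_smul]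
    push_cast
    ring
  have hsol := isLongRangeSolution_of_eq ha.le hγ hV₁ hV₁_le hV₂_le hV₁_rad hu hu2 hg2 hf2 hf heq'
  have hbound := hsol.isMorawetzBound_of_resolventThreshold_le hd hτ₀ hγ toReal_nonneg hτ
  have hτa : 1 + 2 * a ≤ τ := le_trans (le_add_of_nonneg_right (sq_nonneg _)) hτ
  refine (hnorms hbound hτ₀ (by linarith)
    (fun x ↦ by linarith [le_of_abs_le (hsol.abs_add_le x)]) (hu.of_le one_le_two)).trans_eq ?_
  rw [← mul_assoc, ENNReal.ofReal_mul (by positivity), ENNReal.ofReal_pow toReal_nonneg,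
    ENNReal.ofReal_toReal hf]
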